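/- arXiv:1505.00150 — 3 statements merged into one kernel-verified Lean document; each statement's English description precedes it below -/
import Mathlib

section
/- Let T>0, E a separable Banach space, V a Banach space densely and continuously embedded in E, and {A(t)}_{t∈[0,T]} a family of linear operators on E satisfying (Hyp'1) with constant ω>0 and (Hyp2)–(Hyp4). For μ∈[0,1] set A^{(μ)}(t) := −μI + (1−μ)A(t) and let {R^{(μ,λ)}(t,s)}_{0≤s≤t≤T} be the evolution system corresponding to {λA^{(μ)}(t)}_{t∈[0,T]} for λ>0. Let cl(A^{(μ0)}_0) denote the closure of the operator (1/T)∫_0^T A^{(μ0)}(τ)dτ (defined on V) and S_{cl(A^{(μ0)}_0)} the C0 semigroup it generates. If (k_n) is a sequence of positive integers and (λ_n)⊂(0,∞), (μ_n)⊂[0,1] satisfy k_n→∞, k_nλ_n→ε for some ε>0, and μ_n→μ0, then for every x∈E, R^{(μ_n,λ_n)}(T,0)^{k_n} x → S_{cl(A^{(μ0)}_0)}(εT) x as n→∞. -/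
open Filter Topology Set MeasureTheory

noncomputable section

variable {E : Type*} [NormedAddCommGroup E] [NormedSpace ℝ E]

/-- A C₀ semigroup of bounded linear operators on `E`. -/
structure IsC0Semigroup (S : ℝ → E →L[ℝ] E) : Prop where
  map_zero : S 0 = 1
  map_add : ∀ ⦃t s : ℝ⦄, 0 ≤ t → 0 ≤ s → S (t + s) = (S t).comp (S s)
  strong_cont : ∀ x : E, ContinuousOn (fun t => S t x) (Ici (0 : ℝ))

/-- `y` is the limit of `t⁻¹ • (S t x - x)` as `t → 0⁺`. -/
def GenLimitAt (S : ℝ → E →L[ℝ] E) (x y : E) : Prop :=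
  Tendsto (fun t : ℝ => t⁻¹ • (S t x - x)) (𝓝[>] (0 : ℝ)) (𝓝 y)

/-- The (unbounded) operator with domain `D` and action `A` is the generator of `S`. -/
def IsGeneratorOf (D : Set E) (A : E → E) (S : ℝ → E →L[ℝ] E) : Prop :=
  (∀ x, x ∈ D ↔ ∃ y, GenLimitAt S x y) ∧ ∀ x ∈ D, GenLimitAt S x (A x)

/-- Graph of an operator with domain `D` and action `A`. -/
def opGraph (D : Set E) (A : E → E) : Set (E × E) := {p | p.1 ∈ D ∧ p.2 = A p.1}

/-- The operator `(D, A)` is closable: the closure of its graph is a graph of a function. -/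
def IsClosableOp (D : Set E) (A : E → E) : Prop :=
  ∀ x y₁ y₂, (x, y₁) ∈ closure (opGraph D A) → (x, y₂) ∈ closure (opGraph D A) → y₁ = y₂

/-- `(D', A')` is the closure of the operator `(D, A)`. -/
def IsClosureOf (D' : Set E) (A' : E → E) (D : Set E) (A : E → E) : Prop :=
  (∀ x, x ∈ D' ↔ ∃ y, (x, y) ∈ closure (opGraph D A)) ∧
  ∀ x ∈ D', (x, A' x) ∈ closure (opGraph D A)

/-- `(D, A)` is a linear operator (its domain is a subspace on which it acts linearly). -/
def IsLinearOp (D : Set E) (A : E → E) : Prop :=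
  (0 : E) ∈ D ∧
  (∀ x ∈ D, ∀ y ∈ D, x + y ∈ D ∧ A (x + y) = A x + A y) ∧
  (∀ (c : ℝ), ∀ x ∈ D, c • x ∈ D ∧ A (c • x) = c • A x)

/-- An evolution system `{R(t,s)}_{0 ≤ s ≤ t ≤ T}` on `E`. -/
structure IsEvolutionSystem (T : ℝ) (R : ℝ → ℝ → E →L[ℝ] E) : Prop where
  refl : ∀ t ∈ Icc (0 : ℝ) T, R t t = 1
  comp : ∀ ⦃s r t : ℝ⦄, 0 ≤ s → s ≤ r → r ≤ t → t ≤ T → R t s = (R t r).comp (R r s)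
  strong_cont : ∀ x : E, ContinuousOn (fun p : ℝ × ℝ => R p.1 p.2 x)
    {p : ℝ × ℝ | 0 ≤ p.2 ∧ p.2 ≤ p.1 ∧ p.1 ≤ T}

/-- The parameter domain `{(t,s) : 0 ≤ s ≤ t ≤ T}` of an evolution system. -/
def evolDomain (T : ℝ) : Set (ℝ × ℝ) := {p : ℝ × ℝ | 0 ≤ p.2 ∧ p.2 ≤ p.1 ∧ p.1 ≤ T}

/-- A family `{R^{(λ)}}_{λ∈[0,1]}` of evolution systems is continuous: for every `x ∈ E`
and every sequence `λₙ → λ₀` in `[0,1]`, `R^{(λₙ)}(t,s)x → R^{(λ₀)}(t,s)x` uniformly in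
`0 ≤ s ≤ t ≤ T`. -/
def IsContinuousEvolFamily (T : ℝ) (R : ℝ → ℝ → ℝ → E →L[ℝ] E) : Prop :=
  ∀ (x : E) (l : ℕ → ℝ) (l0 : ℝ), (∀ n, l n ∈ Icc (0 : ℝ) 1) → l0 ∈ Icc (0 : ℝ) 1 →
    Tendsto l atTop (𝓝 l0) →
    TendstoUniformlyOn (fun n p => R (l n) p.1 p.2 x) (fun p => R l0 p.1 p.2 x)
      atTop (evolDomain T)

/-- The map `Σ(x,w,λ)(t) = R^{(λ)}(t,0)x + ∫₀ᵗ R^{(λ)}(t,s) w(s) ds`. -/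
def evolMap (R : ℝ → ℝ → E →L[ℝ] E) (x : E) (w : ℝ → E) (t : ℝ) : E :=
  R t 0 x + ∫ s in (0 : ℝ)..t, R t s (w s)

/-- The Hausdorff measure of noncompactness of a set `Q`. -/
def hausdorffMNC (Q : Set E) : ℝ :=
  sInf {r : ℝ | 0 < r ∧ ∃ c : Finset E, Q ⊆ ⋃ y ∈ c, Metric.ball y r}

variable {V : Type*} [NormedAddCommGroup V] [NormedSpace ℝ V]

/-- The data of a time-dependent family `{A(t)}` of (unbounded) linear operators on `E`:
domains `dom t`, actions `op t`, the C₀ semigroups `sg t = S_{A(t)}`, and the bounded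
operators `bdd t ∈ L(V,E)` obtained by restricting `A(t)` to `V` (via the embedding `ι`). -/
structure HypData (E V : Type*) [NormedAddCommGroup E] [NormedSpace ℝ E]
    [NormedAddCommGroup V] [NormedSpace ℝ V] where
  dom : ℝ → Set E
  op : ℝ → E → E
  sg : ℝ → ℝ → E →L[ℝ] E
  bdd : ℝ → V →L[ℝ] E

/-- Each `A(t)`, `t ∈ [0,T]`, generates the C₀ semigroup `sg t`. -/
def HypGen (T : ℝ) (A : HypData E V) : Prop :=
  ∀ t ∈ Icc (0 : ℝ) T, IsC0Semigroup (A.sg t) ∧ IsGeneratorOf (A.dom t) (A.op t) (A.sg t)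

/-- Stability of a family of semigroups: for `0 ≤ t₁ ≤ ⋯ ≤ tₙ ≤ T`, `sᵢ ≥ 0`,
`‖S(t₁)(s₁)⋯S(tₙ)(sₙ)‖ ≤ M e^{ω(s₁+⋯+sₙ)}`. -/
def StableFamily {F : Type*} [NormedRing F] (T : ℝ) (S : ℝ → ℝ → F) (M ω : ℝ) : Prop :=
  ∀ (n : ℕ) (ts ss : Fin n → ℝ), Monotone ts → (∀ i, ts i ∈ Icc (0 : ℝ) T) →
    (∀ i, 0 ≤ ss i) →
    ‖(List.ofFn fun i => S (ts i) (ss i)).prod‖ ≤ M * Real.exp (ω * ∑ i, ss i)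

/-- Condition (Hyp'1): stability with `M = 1` and exponent `−ω`, `ω > 0`. -/
def Hyp1' (T : ℝ) (A : HypData E V) (ω : ℝ) : Prop :=
  0 < ω ∧ StableFamily T A.sg 1 (-ω)

/-- Condition (Hyp1): stability with constants `M ≥ 1`, `ω ∈ ℝ`. -/
def Hyp1 (T : ℝ) (A : HypData E V) (M ω : ℝ) : Prop :=
  1 ≤ M ∧ StableFamily T A.sg M ω

variable (ι : V →L[ℝ] E)

/-- Condition (Hyp2): `V` is `A(t)`-admissible for each `t` and the family of parts of the
`A(t)` in `V` is stable with constants `M_V`, `ω_V`. -/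
def Hyp2 (T : ℝ) (A : HypData E V) (MV ωV : ℝ) : Prop :=
  ∃ SV : ℝ → ℝ → V →L[ℝ] V,
    (∀ t ∈ Icc (0 : ℝ) T, IsC0Semigroup (SV t)) ∧
    (∀ t ∈ Icc (0 : ℝ) T, ∀ s ≥ (0 : ℝ), ∀ v : V, ι (SV t s v) = A.sg t s (ι v)) ∧
    1 ≤ MV ∧ StableFamily T SV MV ωV

/-- Condition (Hyp3): `V ⊆ D(A(t))`, `A(t)|_V = bdd t ∈ L(V,E)`, and `t ↦ bdd t` is
norm-continuous on `[0,T]`. -/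
def Hyp3 (T : ℝ) (A : HypData E V) : Prop :=
  (∀ t ∈ Icc (0 : ℝ) T, ∀ v : V, ι v ∈ A.dom t ∧ A.op t (ι v) = A.bdd t v) ∧
  ContinuousOn A.bdd (Icc (0 : ℝ) T)

/-- The time average `A₀ = (1/T)∫₀ᵀ A(τ) dτ ∈ L(V,E)`. -/
def timeAvg (T : ℝ) (A : HypData E V) : V →L[ℝ] E :=
  (1 / T) • ∫ τ in (0 : ℝ)..T, A.bdd τ

/-- Condition (Hyp4): there is `μ₀ > −ω` such that `(μ₀ I − A₀)V` is dense in `E`. -/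
def Hyp4 (T : ℝ) (A : HypData E V) (ω : ℝ) : Prop :=
  ∃ μ0 : ℝ, -ω < μ0 ∧ Dense (Set.range fun v : V => μ0 • ι v - timeAvg T A v)

/-- Condition (Hyp5): `A(0) = A(T)` (equal domains and actions). -/
def Hyp5 (T : ℝ) (A : HypData E V) : Prop :=
  A.dom 0 = A.dom T ∧ ∀ x ∈ A.dom 0, A.op 0 x = A.op T x

/-- `R` is the evolution system determined by the family with restrictions `Abdd t ∈ L(V,E)`:
it is an evolution system satisfying the norm bound `‖R(t,s)‖ ≤ M e^{ω(t−s)}`, with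
`(∂⁺/∂t)R(t,s)v|_{t=s} = A(s)v` and `(∂/∂s)R(t,s)v = −R(t,s)A(s)v` for `v ∈ V`. -/
def IsDeterminedEvolSystem (T : ℝ) (Abdd : ℝ → V →L[ℝ] E) (M ω : ℝ)
    (R : ℝ → ℝ → E →L[ℝ] E) : Prop :=
  IsEvolutionSystem T R ∧
  (∀ s t : ℝ, 0 ≤ s → s ≤ t → t ≤ T → ‖R t s‖ ≤ M * Real.exp (ω * (t - s))) ∧
  (∀ v : V, ∀ s ∈ Ico (0 : ℝ) T,
    HasDerivWithinAt (fun t => R t s (ι v)) (Abdd s v) (Ici s) s) ∧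
  (∀ v : V, ∀ s t : ℝ, 0 ≤ s → s ≤ t → t ≤ T →
    HasDerivWithinAt (fun r => R t r (ι v)) (-(R t s (Abdd s v))) (Icc (0 : ℝ) t) s)

section Helpers

variable {E : Type*} [NormedAddCommGroup E] [NormedSpace ℝ E]

lemma aux_pow_norm_le (F : E →L[ℝ] E) (hF : ‖F‖ ≤ 1) (m : ℕ) (z : E) : ‖(F ^ m) z‖ ≤ ‖z‖ := by
  induction m with
  | zero => simp
  | succ m ih =>
    rw [pow_succ', mul_apply_eq_comp]
    exact ((F.le_of_opNorm_le hF _).trans (by rw [one_mul])).trans ih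

lemma aux_pow_sub (F : E →L[ℝ] E) (hF : ‖F‖ ≤ 1) (m : ℕ) (z : E) :
    ‖(F ^ m) z - z‖ ≤ m * ‖F z - z‖ := by
  induction m with
  | zero => simp
  | succ m ih =>
    have h : (F ^ (m + 1)) z - z = (F ^ m) (F z - z) + ((F ^ m) z - z) := by
      rw [pow_succ, mul_apply_eq_comp, map_sub]; abel
    rw [h]
    have := aux_pow_norm_le F hF m (F z - z)
    refine (norm_add_le _ _).trans ?_
    rw [Nat.cast_succ]
    linarith

lemma aux_interp (F : E →L[ℝ] E) (hF : ‖F‖ ≤ 1) (a b : E) (m : ℕ) (hm : 1 ≤ m) (c : ℝ)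
    (ha : ‖(m : ℝ) • (F a - a) - (b - a)‖ ≤ c)
    (hb : ‖(m : ℝ) • (F b - b) - (b - a)‖ ≤ c) : ‖(F ^ m) a - b‖ ≤ c := by
  have hm0 : (0 : ℝ) < m := by exact_mod_cast hm
  have key : ∀ j : ℕ, j ≤ m → ‖(F ^ j) a - (a + ((j : ℝ) / m) • (b - a))‖ ≤ (j : ℝ) / m * c := by
    intro j
    induction j with
    | zero => intro _; simp
    | succ j ih =>
      intro hj
      have ih' := ih (by omega)
      set θ : ℝ := (j : ℝ) / m with hθ
      have hθ0 : 0 ≤ θ := by positivity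
      have hθ1 : θ ≤ 1 := by
        rw [hθ, div_le_one hm0]; exact_mod_cast (by omega : j ≤ m)
      have e1 : (((j + 1 : ℕ) : ℝ) / m) = θ + (m : ℝ)⁻¹ := by
        rw [hθ]; push_cast; field_simp
      have hdec : (F ^ (j + 1)) a - (a + (((j + 1 : ℕ) : ℝ) / m) • (b - a))
          = F ((F ^ j) a - (a + θ • (b - a)))
            + (m : ℝ)⁻¹ • ((1 - θ) • ((m : ℝ) • (F a - a) - (b - a))
              + θ • ((m : ℝ) • (F b - b) - (b - a))) := by
        rw [e1, pow_succ', mul_apply_eq_comp]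
        simp only [map_sub, map_add, map_smul]
        match_scalars <;> field_simp <;> ring
      rw [hdec, e1]
      have n1 : ‖F ((F ^ j) a - (a + θ • (b - a)))‖ ≤ θ * c :=
        ((F.le_of_opNorm_le hF _).trans (by rw [one_mul])).trans ih'
      have n2 : ‖(1 - θ) • ((m : ℝ) • (F a - a) - (b - a))
              + θ • ((m : ℝ) • (F b - b) - (b - a))‖ ≤ c := by
        refine (norm_add_le _ _).trans ?_
        rw [norm_smul, norm_smul, Real.norm_of_nonneg hθ0,
          Real.norm_of_nonneg (by linarith : 0 ≤ 1 - θ)]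
        nlinarith
      refine (norm_add_le _ _).trans ?_
      rw [norm_smul, Real.norm_of_nonneg (by positivity : (0 : ℝ) ≤ (m : ℝ)⁻¹)]
      have : (m : ℝ)⁻¹ * ‖(1 - θ) • ((m : ℝ) • (F a - a) - (b - a))
              + θ • ((m : ℝ) • (F b - b) - (b - a))‖ ≤ (m : ℝ)⁻¹ * c := by gcongr
      linarith
  have := key m le_rfl
  rw [div_self hm0.ne'] at this
  simpa using this

lemma aux_chain (G : E →L[ℝ] E) (hG : ‖G‖ ≤ 1) (u : ℕ → E) (c : ℝ) (N : ℕ)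
    (h : ∀ i < N, ‖G (u i) - u (i + 1)‖ ≤ c) : ‖(G ^ N) (u 0) - u N‖ ≤ N * c := by
  induction N with
  | zero => simp
  | succ N ih =>
    have ih' := ih (fun i hi => h i (by omega))
    have hd : (G ^ (N + 1)) (u 0) - u (N + 1)
        = G ((G ^ N) (u 0) - u N) + (G (u N) - u (N + 1)) := by
      rw [pow_succ', mul_apply_eq_comp, map_sub]; abel
    rw [hd]
    refine (norm_add_le _ _).trans ?_
    have n1 : ‖G ((G ^ N) (u 0) - u N)‖ ≤ N * c :=
        ((G.le_of_opNorm_le hG _).trans (by rw [one_mul])).trans ih'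
    have := h N (by omega)
    rw [Nat.cast_succ]
    linarith

lemma aux_norm_pow_le (F : E →L[ℝ] E) (hF : ‖F‖ ≤ 1) (m : ℕ) : ‖F ^ m‖ ≤ 1 :=
  ContinuousLinearMap.opNorm_le_bound _ zero_le_one
    (fun z => by rw [one_mul]; exact aux_pow_norm_le F hF m z)

/-- Convergence of contractions on all of `E` from convergence on a dense set. -/
lemma aux_dense {V : Type*} (ι : V → E) (hd : DenseRange ι) (G : ℕ → E →L[ℝ] E)
    (L : E →L[ℝ] E) (hG : ∀ n, ‖G n‖ ≤ 1)
    (h : ∀ v, Tendsto (fun n => G n (ι v)) atTop (𝓝 (L (ι v)))) (x : E) :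
    Tendsto (fun n => G n x) atTop (𝓝 (L x)) := by
  rw [Metric.tendsto_atTop]
  intro e he
  have hM : 0 < 1 + ‖L‖ := by positivity
  obtain ⟨v, hv⟩ := hd.exists_dist_lt x (ε := e / 2 / (1 + ‖L‖)) (by positivity)
  obtain ⟨n0, hn0⟩ := (Metric.tendsto_atTop.1 (h v)) (e / 2) (by positivity)
  refine ⟨n0, fun n hn => ?_⟩
  have h1 := hn0 n hn
  rw [dist_eq_norm] at h1 hv ⊢
  have hd : G n x - L x = G n (x - ι v) + (G n (ι v) - L (ι v)) - L (x - ι v) := by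
    simp only [map_sub]; abel
  rw [hd]
  have a1 : ‖G n (x - ι v)‖ ≤ 1 * ‖x - ι v‖ := (G n).le_of_opNorm_le (hG n) _
  have a2 : ‖L (x - ι v)‖ ≤ ‖L‖ * ‖x - ι v‖ := L.le_opNorm _
  have a3 := norm_sub_le (G n (x - ι v) + (G n (ι v) - L (ι v))) (L (x - ι v))
  have a4 := norm_add_le (G n (x - ι v)) (G n (ι v) - L (ι v))
  rw [lt_div_iff₀ hM] at hv
  nlinarith

lemma aux_chernoff [CompleteSpace E] {V : Type*} (ι : V → E) (hd : DenseRange ι)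
    (f : E → E) (D' : Set E) (A' : E → E) (S : ℝ → E →L[ℝ] E)
    (hclos : IsClosureOf D' A' (Set.range ι) f)
    (hS : IsC0Semigroup S) (hgenS : IsGeneratorOf D' A' S)
    (F : ℕ → E →L[ℝ] E) (hF : ∀ n, ‖F n‖ ≤ 1) (k : ℕ → ℕ) (hk : Tendsto k atTop atTop)
    (τ : ℝ) (hτ : 0 < τ)
    (hcons : ∀ v, Tendsto (fun n => (k n : ℝ) • (F n (ι v) - ι v)) atTop (𝓝 (τ • f (ι v)))) :
    ∀ x : E, Tendsto (fun n => (F n ^ k n) x) atTop (𝓝 (S τ x)) := by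
  refine aux_dense ι hd _ _ (fun n => aux_norm_pow_le _ (hF n) _) ?_
  intro v0
  set x := ι v0 with hx
  -- `F n → 1` on the range
  have hzero : ∀ v, Tendsto (fun n => F n (ι v) - ι v) atTop (𝓝 0) := by
    intro v
    have h1 : Tendsto (fun n => ((k n : ℝ))⁻¹) atTop (𝓝 0) :=
      tendsto_inv_atTop_zero.comp (tendsto_natCast_atTop_atTop.comp hk)
    have h2 := h1.smul (hcons v)
    rw [zero_smul] at h2
    refine h2.congr' ?_
    filter_upwards [hk.eventually_ge_atTop 1] with n hn
    rw [smul_smul, inv_mul_cancel₀, one_smul]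
    have : (0 : ℝ) < k n := by exact_mod_cast hn
    exact this.ne'
  have hxD : x ∈ D' := (hclos.1 x).2 ⟨f x, subset_closure ⟨⟨v0, rfl⟩, rfl⟩⟩
  set y := A' x with hy
  have hgen : GenLimitAt S x y := hgenS.2 x hxD
  -- approximations
  have happ : ∀ s : ℝ, 0 ≤ s → ∀ η > (0 : ℝ), ∃ v, ‖ι v - S s x‖ ≤ η ∧ ‖f (ι v) - S s y‖ ≤ η := by
    intro s hs η hη
    have hg : GenLimitAt S (S s x) (S s y) := by
      have h1 : Tendsto (fun t : ℝ => S s (t⁻¹ • (S t x - x))) (𝓝[>] (0 : ℝ)) (𝓝 (S s y)) :=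
        ((S s).continuous.tendsto y).comp hgen
      refine h1.congr' ?_
      filter_upwards [self_mem_nhdsWithin] with t ht
      have ht' : (0 : ℝ) ≤ t := le_of_lt ht
      have e1 : S t (S s x) = S s (S t x) := by
        rw [← ContinuousLinearMap.comp_apply, ← hS.map_add ht' hs, add_comm, hS.map_add hs ht',
          ContinuousLinearMap.comp_apply]
      rw [map_smul, map_sub, e1]
    have hmem : S s x ∈ D' := (hgenS.1 _).2 ⟨_, hg⟩
    have heq : A' (S s x) = S s y := tendsto_nhds_unique (hgenS.2 _ hmem) hg
    have hcl := hclos.2 _ hmem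
    rw [heq, Metric.mem_closure_iff] at hcl
    obtain ⟨⟨p, q⟩, ⟨⟨v, hv⟩, hq⟩, hdist⟩ := hcl η hη
    simp only at hv hq
    refine ⟨v, ?_, ?_⟩
    · rw [← dist_eq_norm, dist_comm, hv]
      exact (le_max_left _ _).trans hdist.le
    · rw [← dist_eq_norm, dist_comm, hv, ← hq]
      exact (le_max_right _ _).trans hdist.le
  -- uniform bound
  obtain ⟨M, hM1, hM⟩ : ∃ M : ℝ, 1 ≤ M ∧ ∀ s ∈ Icc (0 : ℝ) τ, ‖S s‖ ≤ M := by
    have hb : ∀ z : E, ∃ C, ∀ s : Icc (0 : ℝ) τ, ‖S s z‖ ≤ C := by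
      intro z
      obtain ⟨C, hC⟩ := (isCompact_Icc (a := (0 : ℝ)) (b := τ)).exists_bound_of_continuousOn
        ((hS.strong_cont z).mono Icc_subset_Ici_self)
      exact ⟨C, fun s => hC s s.2⟩
    obtain ⟨C, hC⟩ := banach_steinhaus hb
    exact ⟨max 1 C, le_max_left _ _, fun s hs => (hC ⟨s, hs⟩).trans (le_max_right _ _)⟩
  have hM0 : 0 < M := by linarith
  rw [Metric.tendsto_atTop]
  suffices H : ∀ e > (0 : ℝ), ∀ᶠ n in atTop, ‖(F n ^ k n) x - S τ x‖ ≤ (5 * τ + 1) * e by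
    intro e he
    have h := H (e / 2 / (5 * τ + 1)) (by positivity)
    obtain ⟨n0, hn0⟩ := eventually_atTop.1 h
    refine ⟨n0, fun n hn => ?_⟩
    rw [dist_eq_norm]
    have := hn0 n hn
    rw [mul_div_cancel₀ _ (by positivity)] at this
    linarith
  intro e he
  -- choose the mesh
  have hδ1 : ∀ᶠ t in 𝓝[>] (0 : ℝ), ‖S t x - x - t • y‖ ≤ t * (e / M) := by
    have := (Metric.tendsto_nhds.1 hgen) (e / M) (by positivity)
    filter_upwards [this, self_mem_nhdsWithin] with t ht ht0
    have ht0' : (0 : ℝ) < t := ht0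
    have e1 : S t x - x - t • y = t • (t⁻¹ • (S t x - x) - y) := by
      rw [smul_sub, smul_smul, mul_inv_cancel₀ ht0'.ne', one_smul]
    rw [e1, norm_smul, Real.norm_of_nonneg ht0'.le]
    rw [dist_eq_norm] at ht
    gcongr
  have hδ2 : ∀ᶠ t in 𝓝[>] (0 : ℝ), ‖S t y - y‖ ≤ e / M := by
    have h0 : Tendsto (fun t => S t y) (𝓝[>] (0 : ℝ)) (𝓝 (S 0 y)) :=
      ((hS.strong_cont y) 0 self_mem_Ici).mono_left (nhdsWithin_mono _ Ioi_subset_Ici_self)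
    rw [hS.map_zero] at h0
    filter_upwards [(Metric.tendsto_nhds.1 h0) (e / M) (by positivity)] with t ht
    rw [dist_eq_norm] at ht
    exact ht.le
  have hmesh : Tendsto (fun N : ℕ => τ / (N : ℝ)) atTop (𝓝[>] (0 : ℝ)) := by
    refine tendsto_nhdsWithin_iff.2 ⟨tendsto_const_div_atTop_nhds_zero_nat τ, ?_⟩
    filter_upwards [eventually_ge_atTop 1] with N hN
    have : (0 : ℝ) < N := by exact_mod_cast hN
    exact div_pos hτ this
  obtain ⟨N, hN1, hN2, hN⟩ := ((hmesh.eventually hδ1).and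
    ((hmesh.eventually hδ2).and (eventually_ge_atTop 1))).exists
  have hNpos : (0 : ℝ) < N := by exact_mod_cast hN
  set δ : ℝ := τ / N with hδ
  have hδ0 : 0 < δ := by positivity
  have hNδ : (N : ℝ) * δ = τ := by rw [hδ]; field_simp
  set η : ℝ := δ * e / (δ + 2) with hη
  have hη0 : 0 < η := by positivity
  have hηe : δ * η + 2 * η = δ * e := by rw [hη]; field_simp
  choose! vv hv1 hv2 using fun (i : ℕ) => happ (i * δ) (by positivity) η hη0
  set m : ℕ → ℕ := fun n => k n / N with hm
  have hmlim : ∀ v, Tendsto (fun n => (m n : ℝ) • (F n (ι v) - ι v)) atTop (𝓝 (δ • f (ι v))) := by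
    intro v
    have hr : Tendsto (fun n => ((k n % N : ℕ) : ℝ) • (F n (ι v) - ι v)) atTop (𝓝 0) := by
      have h0 := (hzero v).norm.const_mul (N : ℝ)
      rw [norm_zero, mul_zero] at h0
      refine squeeze_zero_norm (fun n => ?_) h0
      rw [norm_smul, Real.norm_of_nonneg (Nat.cast_nonneg _)]
      gcongr
      exact_mod_cast (Nat.mod_lt _ (by omega)).le
    have h2 := ((hcons v).sub hr).const_smul ((N : ℝ)⁻¹)
    have e2 : (N : ℝ)⁻¹ • (τ • f (ι v) - 0) = δ • f (ι v) := by
      rw [sub_zero, smul_smul, hδ]; congr 1; field_simp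
    rw [e2] at h2
    refine h2.congr (fun n => ?_)
    rw [← sub_smul, smul_smul]
    congr 1
    have : ((k n : ℕ) : ℝ) = (N : ℝ) * (m n : ℝ) + ((k n % N : ℕ) : ℝ) := by
      exact_mod_cast (Nat.div_add_mod (k n) N).symm
    rw [this]; field_simp; ring
  set u : ℕ → E := fun i => S (i * δ) x with hu
  set yy : ℕ → E := fun i => S (i * δ) y with hyy
  have hSle : ∀ i < N, ∀ z : E, ‖S (i * δ) z‖ ≤ M * ‖z‖ := by
    intro i hi z
    refine (S (i * δ)).le_of_opNorm_le (hM _ ⟨by positivity, ?_⟩) z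
    rw [← hNδ]
    gcongr
  have hSadd : ∀ i : ℕ, ∀ z : E, S (((i + 1 : ℕ) : ℝ) * δ) z = S (i * δ) (S δ z) := by
    intro i z
    rw [← ContinuousLinearMap.comp_apply, ← hS.map_add (by positivity) hδ0.le]
    congr 2; push_cast; ring
  have hstep : ∀ i < N, ∀ᶠ n in atTop, ‖(F n ^ m n) (u i) - u (i + 1)‖ ≤ 5 * δ * e := by
    intro i hi
    have d1 : ‖u (i + 1) - u i - δ • yy i‖ ≤ δ * e := by
      have : u (i + 1) - u i - δ • yy i = S (i * δ) (S δ x - x - δ • y) := by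
        simp only [hu, hyy, hSadd, map_sub, map_smul]
      rw [this]
      refine (hSle i hi _).trans ?_
      calc M * ‖S δ x - x - δ • y‖ ≤ M * (δ * (e / M)) := by gcongr
        _ = δ * e := by field_simp
    have d2 : ‖yy (i + 1) - yy i‖ ≤ e := by
      have : yy (i + 1) - yy i = S (i * δ) (S δ y - y) := by
        simp only [hyy, hSadd, map_sub]
      rw [this]
      refine (hSle i hi _).trans ?_
      calc M * ‖S δ y - y‖ ≤ M * (e / M) := by gcongr
        _ = e := by field_simp
    set a := ι (vv i) with ha
    set b := ι (vv (i + 1)) with hb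
    have ua : ‖a - u i‖ ≤ η := hv1 i
    have ub : ‖b - u (i + 1)‖ ≤ η := hv1 (i + 1)
    have fa : ‖f a - yy i‖ ≤ η := hv2 i
    have fb : ‖f b - yy (i + 1)‖ ≤ η := hv2 (i + 1)
    have smul_le : ∀ (z : E) (c : ℝ), ‖z‖ ≤ c → ‖δ • z‖ ≤ δ * c := by
      intro z c hz
      rw [norm_smul, Real.norm_of_nonneg hδ0.le]; gcongr
    have la : ‖δ • f a - (b - a)‖ ≤ 2 * δ * e := by
      have : δ • f a - (b - a) = δ • (f a - yy i) - (u (i + 1) - u i - δ • yy i)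
          - (b - u (i + 1)) + (a - u i) := by module
      rw [this]
      have q1 := norm_add_le (δ • (f a - yy i) - (u (i + 1) - u i - δ • yy i)
          - (b - u (i + 1))) (a - u i)
      have q2 := norm_sub_le (δ • (f a - yy i) - (u (i + 1) - u i - δ • yy i)) (b - u (i + 1))
      have q3 := norm_sub_le (δ • (f a - yy i)) (u (i + 1) - u i - δ • yy i)
      have q4 := smul_le _ _ fa
      linarith
    have lb : ‖δ • f b - (b - a)‖ ≤ 3 * δ * e := by
      have : δ • f b - (b - a) = δ • (f b - yy (i + 1)) - (u (i + 1) - u i - δ • yy i)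
          - (b - u (i + 1)) + (a - u i) + δ • (yy (i + 1) - yy i) := by module
      rw [this]
      have q0 := norm_add_le (δ • (f b - yy (i + 1)) - (u (i + 1) - u i - δ • yy i)
          - (b - u (i + 1)) + (a - u i)) (δ • (yy (i + 1) - yy i))
      have q1 := norm_add_le (δ • (f b - yy (i + 1)) - (u (i + 1) - u i - δ • yy i)
          - (b - u (i + 1))) (a - u i)
      have q2 := norm_sub_le (δ • (f b - yy (i + 1)) - (u (i + 1) - u i - δ • yy i))
        (b - u (i + 1))
      have q3 := norm_sub_le (δ • (f b - yy (i + 1))) (u (i + 1) - u i - δ • yy i)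
      have q4 := smul_le _ _ fb
      have q5 := smul_le _ _ d2
      linarith
    have hδe : 0 < δ * e := by positivity
    have t1 := ((hmlim (vv i)).sub_const (b - a)).norm.eventually_le_const
      (show ‖δ • f a - (b - a)‖ < 4 * δ * e by linarith)
    have t2 := ((hmlim (vv (i + 1))).sub_const (b - a)).norm.eventually_le_const
      (show ‖δ • f b - (b - a)‖ < 4 * δ * e by linarith)
    filter_upwards [t1, t2, hk.eventually_ge_atTop N] with n h1 h2 h3
    have hmn : 1 ≤ m n := (Nat.one_le_div_iff (by omega)).2 h3
    have hmain := aux_interp (F n) (hF n) a b (m n) hmn _ h1 h2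
    have hdec : (F n ^ m n) (u i) - u (i + 1)
        = ((F n ^ m n) a - b) - (F n ^ m n) (a - u i) + (b - u (i + 1)) := by
      rw [map_sub]; abel
    rw [hdec]
    have q1 := norm_add_le (((F n ^ m n) a - b) - (F n ^ m n) (a - u i)) (b - u (i + 1))
    have q2 := norm_sub_le ((F n ^ m n) a - b) ((F n ^ m n) (a - u i))
    have q3 := aux_pow_norm_le (F n) (hF n) (m n) (a - u i)
    have : 0 < δ * η := by positivity
    linarith
  have hall : ∀ᶠ n in atTop, ∀ i < N, ‖(F n ^ m n) (u i) - u (i + 1)‖ ≤ 5 * δ * e := by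
    have := (Filter.eventually_all_finset (l := atTop) (Finset.range N)
      (p := fun i n => ‖(F n ^ m n) (u i) - u (i + 1)‖ ≤ 5 * δ * e)).2
      (fun i hi => hstep i (Finset.mem_range.1 hi))
    filter_upwards [this] with n hn i hi
    exact hn i (Finset.mem_range.2 hi)
  have hrem : ∀ᶠ n in atTop, (N : ℝ) * ‖F n x - x‖ ≤ e := by
    have h0 := (hzero v0).norm.const_mul (N : ℝ)
    rw [norm_zero, mul_zero] at h0
    exact h0.eventually_le_const he
  filter_upwards [hall, hrem] with n h1 h2
  have c1 := aux_chain (F n ^ m n) (aux_norm_pow_le _ (hF n) _) u _ N h1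
  have u0 : u 0 = x := by simp [hu, hS.map_zero]
  have uN : u N = S τ x := by simp only [hu]; rw [hNδ]
  rw [u0, uN, ← pow_mul] at c1
  have hkn : k n = m n * N + k n % N := by
    rw [mul_comm]; exact (Nat.div_add_mod (k n) N).symm
  have hdec : (F n ^ k n) x - S τ x = (F n ^ (m n * N)) ((F n ^ (k n % N)) x - x)
      + ((F n ^ (m n * N)) x - S τ x) := by
    conv_lhs => rw [hkn, pow_add, mul_apply_eq_comp]
    rw [map_sub]; abel
  rw [hdec]
  have q1 := norm_add_le ((F n ^ (m n * N)) ((F n ^ (k n % N)) x - x)) ((F n ^ (m n * N)) x - S τ x)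
  have q2 := aux_pow_norm_le (F n) (hF n) (m n * N) ((F n ^ (k n % N)) x - x)
  have q3 := aux_pow_sub (F n) (hF n) (k n % N) x
  have q4 : ((k n % N : ℕ) : ℝ) * ‖F n x - x‖ ≤ N * ‖F n x - x‖ := by
    gcongr
    exact_mod_cast (Nat.mod_lt _ (by omega)).le
  have q5 : (N : ℝ) * (5 * δ * e) = 5 * τ * e := by rw [← hNδ]; ring
  linarith

end Helpers

/-- Lemma 5(ii): with `A^{(μ)}(t) := −μI + (1−μ)A(t)` and `R^{(μ,λ)}` the
evolution system of `{λA^{(μ)}(t)}`, if `kₙ → ∞`, `kₙλₙ → ε > 0` and `μₙ → μ₀`, then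
`R^{(μₙ,λₙ)}(T,0)^{kₙ} x → S_{cl(A₀^{(μ₀)})}(εT) x` for every `x ∈ E`, where `cl(A₀^{(μ₀)})`
is the closure of `(1/T)∫₀ᵀ A^{(μ₀)}(τ)dτ` (with domain `ι(V)`). -/
theorem statement_11
    {E : Type*} [NormedAddCommGroup E] [NormedSpace ℝ E] [CompleteSpace E]
    [TopologicalSpace.SeparableSpace E]
    {V : Type*} [NormedAddCommGroup V] [NormedSpace ℝ V] [CompleteSpace V]
    (ι : V →L[ℝ] E) (hιinj : Function.Injective ι) (hιdense : DenseRange ι)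
    (T : ℝ) (hT : 0 < T)
    (A : HypData E V) (ω MV ωV : ℝ)
    (hgen : HypGen T A)
    (h1 : Hyp1' T A ω)
    (h2 : Hyp2 ι T A MV ωV)
    (h3 : Hyp3 ι T A)
    (h4 : Hyp4 ι T A ω)
    -- `RR mu lam` is the evolution system determined by `{λ A^{(μ)}(t)}`
    (RR : ℝ → ℝ → ℝ → ℝ → E →L[ℝ] E)
    (hRR : ∀ mu ∈ Icc (0 : ℝ) 1, ∀ lam > (0 : ℝ),
      IsDeterminedEvolSystem ι T
        (fun s => lam • ((1 - mu) • A.bdd s - mu • ι)) 1 0 (RR mu lam))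
    (mu0 : ℝ) (hmu0 : mu0 ∈ Icc (0 : ℝ) 1)
    -- `f` represents `A₀^{(μ₀)} = (1/T)∫₀ᵀ A^{(μ₀)}(τ)dτ` with domain `ι(V)`,
    -- `(D',A')` is its closure and `S` the C₀ semigroup generated by the closure
    (f : E → E)
    (hf : ∀ v : V, f (ι v) = (1 - mu0) • timeAvg T A v - mu0 • ι v)
    (D' : Set E) (A' : E → E) (S : ℝ → E →L[ℝ] E)
    (hclos : IsClosureOf D' A' (Set.range ι) f)
    (hS : IsC0Semigroup S) (hgenS : IsGeneratorOf D' A' S)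
    -- the sequences
    (kn : ℕ → ℕ) (lamn mun : ℕ → ℝ) (ε : ℝ) (hε : 0 < ε)
    (hlampos : ∀ n, 0 < lamn n) (hmun : ∀ n, mun n ∈ Icc (0 : ℝ) 1)
    (hkn : Tendsto kn atTop atTop)
    (hknlam : Tendsto (fun n => (kn n : ℝ) * lamn n) atTop (𝓝 ε))
    (hmu : Tendsto mun atTop (𝓝 mu0)) :
    ∀ x : E, Tendsto (fun n => (RR (mun n) (lamn n) T 0 ^ kn n) x) atTop
      (𝓝 (S (ε * T) x)) := by
  have hk0 : Tendsto (fun n => ((kn n : ℝ))⁻¹) atTop (𝓝 0) :=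
    tendsto_inv_atTop_zero.comp (tendsto_natCast_atTop_atTop.comp hkn)
  have hlam0 : Tendsto lamn atTop (𝓝 0) := by
    have h := hk0.mul hknlam
    rw [zero_mul] at h
    refine h.congr' ?_
    filter_upwards [hkn.eventually_ge_atTop 1] with n hn
    have : (0 : ℝ) < kn n := by exact_mod_cast hn
    rw [← mul_assoc, inv_mul_cancel₀ this.ne', one_mul]
  have hnorm : ∀ n, ∀ s ∈ Icc (0 : ℝ) T, ‖RR (mun n) (lamn n) T s‖ ≤ 1 := by
    intro n s hs
    have := (hRR _ (hmun n) _ (hlampos n)).2.1 s T hs.1 hs.2 le_rfl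
    simpa using this
  have hder : ∀ n v, ∀ s ∈ Icc (0 : ℝ) T,
      HasDerivWithinAt (fun r => RR (mun n) (lamn n) T r (ι v))
        (-(RR (mun n) (lamn n) T s
          ((lamn n • ((1 - mun n) • A.bdd s - mun n • ι)) v))) (Icc (0 : ℝ) T) s := by
    intro n v s hs
    exact (hRR _ (hmun n) _ (hlampos n)).2.2.2 v s T hs.1 hs.2 le_rfl
  have hrefl : ∀ n, RR (mun n) (lamn n) T T = 1 := fun n =>
    (hRR _ (hmun n) _ (hlampos n)).1.refl T ⟨hT.le, le_rfl⟩
  obtain ⟨C, hC⟩ := (isCompact_Icc (a := (0 : ℝ)) (b := T)).exists_bound_of_continuousOn h3.2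
  have hC0 : 0 ≤ C := (norm_nonneg _).trans (hC 0 ⟨le_rfl, hT.le⟩)
  -- bound on the generators
  have hgb : ∀ n v, ∀ s ∈ Icc (0 : ℝ) T,
      ‖(1 - mun n) • A.bdd s v - mun n • ι v‖ ≤ C * ‖v‖ + ‖ι v‖ := by
    intro n v s hs
    obtain ⟨m0, m1⟩ := hmun n
    refine (norm_sub_le _ _).trans ?_
    rw [norm_smul, norm_smul, Real.norm_of_nonneg m0,
      Real.norm_of_nonneg (by linarith : 0 ≤ 1 - mun n)]
    have a1 : ‖A.bdd s v‖ ≤ C * ‖v‖ := (A.bdd s).le_of_opNorm_le (hC s hs) v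
    have a2 := norm_nonneg (ι v)
    have a3 := norm_nonneg (A.bdd s v)
    nlinarith
  have happly : ∀ n v s, (lamn n • ((1 - mun n) • A.bdd s - mun n • ι)) v
      = lamn n • ((1 - mun n) • A.bdd s v - mun n • ι v) := by
    intro n v s; simp
  have hone : ∀ s ∈ Icc (0 : ℝ) T, ∀ z : E,
      Tendsto (fun n => RR (mun n) (lamn n) T s z) atTop (𝓝 z) := by
    intro s hs z
    refine aux_dense ι hιdense _ 1 (fun n => hnorm n s hs) ?_ z
    intro v
    rw [tendsto_iff_norm_sub_tendsto_zero]
    have h0 := hlam0.mul_const ((C * ‖v‖ + ‖ι v‖) * (T - s))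
    rw [zero_mul] at h0
    refine squeeze_zero (fun n => norm_nonneg _) (fun n => ?_) h0
    have hsub : Icc s T ⊆ Icc 0 T := Icc_subset_Icc_left hs.1
    have := (convex_Icc s T).norm_image_sub_le_of_norm_hasDerivWithin_le
      (f := fun r => RR (mun n) (lamn n) T r (ι v))
      (C := lamn n * (C * ‖v‖ + ‖ι v‖))
      (fun r hr => (hder n v r (hsub hr)).mono hsub) (fun r hr => by
        rw [norm_neg, happly, map_smul, norm_smul, Real.norm_of_nonneg (hlampos n).le]
        have a1 := (RR (mun n) (lamn n) T r).le_of_opNorm_le (hnorm n r (hsub hr))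
          ((1 - mun n) • A.bdd r v - mun n • ι v)
        have a2 := hgb n v r (hsub hr)
        have := (hlampos n).le
        gcongr
        linarith) (right_mem_Icc.2 hs.2) (left_mem_Icc.2 hs.2)
    simp only [hrefl, one_apply_eq_self] at this
    rw [one_apply_eq_self]
    refine this.trans (le_of_eq ?_)
    rw [norm_sub_rev, Real.norm_of_nonneg (by linarith [hs.2])]
    ring
  have hbddv : ∀ v, ContinuousOn (fun s => A.bdd s v) (Icc 0 T) := fun v =>
    h3.2.clm_apply continuousOn_const
  -- continuity of the integrand
  have hcont : ∀ n v, ContinuousOn (fun s => RR (mun n) (lamn n) T s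
      ((1 - mun n) • A.bdd s v - mun n • ι v)) (Icc 0 T) := by
    intro n v s0 hs0
    have hg : ContinuousOn (fun s => (1 - mun n) • A.bdd s v - mun n • ι v) (Icc 0 T) :=
      ((hbddv v).const_smul _).sub continuousOn_const
    set g := fun s => (1 - mun n) • A.bdd s v - mun n • ι v with hgdef
    have hR : ContinuousOn (fun s => RR (mun n) (lamn n) T s (g s0)) (Icc 0 T) := by
      have := (hRR _ (hmun n) _ (hlampos n)).1.strong_cont (g s0)
      exact this.comp (f := fun s : ℝ => (T, s)) (by fun_prop)
        (fun s hs => ⟨hs.1, hs.2, le_rfl⟩)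
    have h1 : Tendsto (fun s => RR (mun n) (lamn n) T s (g s - g s0)) (𝓝[Icc 0 T] s0) (𝓝 0) := by
      have h0 : Tendsto (fun s => ‖g s - g s0‖) (𝓝[Icc 0 T] s0) (𝓝 0) :=
        tendsto_iff_norm_sub_tendsto_zero.1 (hg s0 hs0)
      refine squeeze_zero_norm' ?_ h0
      filter_upwards [self_mem_nhdsWithin] with s hs
      have := (RR (mun n) (lamn n) T s).le_of_opNorm_le (hnorm n s hs) (g s - g s0)
      rwa [one_mul] at this
    have h2 := h1.add (hR s0 hs0)
    rw [zero_add] at h2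
    refine Tendsto.congr (fun s => ?_) h2
    rw [map_sub]; abel
  have hmain := aux_chernoff ι hιdense f D' A' S hclos hS hgenS
    (fun n => RR (mun n) (lamn n) T 0) (fun n => hnorm n 0 ⟨le_rfl, hT.le⟩) kn hkn (ε * T)
    (by positivity) ?_
  · exact hmain
  intro v
  have hFTC : ∀ n, RR (mun n) (lamn n) T 0 (ι v) - ι v = lamn n • ∫ s in (0 : ℝ)..T,
      RR (mun n) (lamn n) T s ((1 - mun n) • A.bdd s v - mun n • ι v) := by
    intro n
    have hI := intervalIntegral.integral_eq_sub_of_hasDerivAt_of_le hT.le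
      (f := fun r => RR (mun n) (lamn n) T r (ι v))
      (f' := fun s => -(lamn n • RR (mun n) (lamn n) T s
        ((1 - mun n) • A.bdd s v - mun n • ι v)))
      (fun s hs => (hder n v s hs).continuousWithinAt)
      (fun s hs => by
        have := (hder n v s (Ioo_subset_Icc_self hs)).hasDerivAt (Icc_mem_nhds hs.1 hs.2)
        rwa [happly, map_smul] at this)
      (((hcont n v).const_smul (lamn n)).neg.intervalIntegrable_of_Icc hT.le)
    rw [intervalIntegral.integral_neg, intervalIntegral.integral_smul, hrefl,
      one_apply_eq_self] at hI
    rw [← neg_sub, ← hI, neg_neg]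
  have hlim : Tendsto (fun n => ∫ s in (0 : ℝ)..T,
      RR (mun n) (lamn n) T s ((1 - mun n) • A.bdd s v - mun n • ι v)) atTop
      (𝓝 (∫ s in (0 : ℝ)..T, ((1 - mu0) • A.bdd s v - mu0 • ι v))) := by
    refine intervalIntegral.tendsto_integral_filter_of_dominated_convergence
      (fun _ => C * ‖v‖ + ‖ι v‖) (Eventually.of_forall fun n => ?_)
      (Eventually.of_forall fun n => ae_of_all _ fun s hs => ?_)
      intervalIntegrable_const (ae_of_all _ fun s hs => ?_)
    · rw [uIoc_of_le hT.le]
      exact ((hcont n v).mono Ioc_subset_Icc_self).aestronglyMeasurable measurableSet_Ioc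
    · rw [uIoc_of_le hT.le] at hs
      have hs' := Ioc_subset_Icc_self hs
      have a1 := (RR (mun n) (lamn n) T s).le_of_opNorm_le (hnorm n s hs')
          ((1 - mun n) • A.bdd s v - mun n • ι v)
      have a2 := hgb n v s hs'
      linarith
    · rw [uIoc_of_le hT.le] at hs
      have hs' := Ioc_subset_Icc_self hs
      have hg : Tendsto (fun n => (1 - mun n) • A.bdd s v - mun n • ι v) atTop
          (𝓝 ((1 - mu0) • A.bdd s v - mu0 • ι v)) :=
        ((hmu.const_sub 1).smul_const _).sub (hmu.smul_const _)
      have h1 : Tendsto (fun n => RR (mun n) (lamn n) T s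
          (((1 - mun n) • A.bdd s v - mun n • ι v) - ((1 - mu0) • A.bdd s v - mu0 • ι v)))
          atTop (𝓝 0) := by
        refine squeeze_zero_norm (fun n => ?_) (tendsto_iff_norm_sub_tendsto_zero.1 hg)
        have := (RR (mun n) (lamn n) T s).le_of_opNorm_le (hnorm n s hs')
          (((1 - mun n) • A.bdd s v - mun n • ι v) - ((1 - mu0) • A.bdd s v - mu0 • ι v))
        rwa [one_mul] at this
      have h2 := h1.add (hone s hs' ((1 - mu0) • A.bdd s v - mu0 • ι v))
      rw [zero_add] at h2
      refine h2.congr (fun n => ?_)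
      rw [map_sub (RR (mun n) (lamn n) T s)]; abel
  have hval : (ε * T) • f (ι v)
      = ε • ∫ s in (0 : ℝ)..T, ((1 - mu0) • A.bdd s v - mu0 • ι v) := by
    have hi : IntervalIntegrable A.bdd volume 0 T := h3.2.intervalIntegrable_of_Icc hT.le
    have hi' : IntervalIntegrable (fun s => A.bdd s v) volume 0 T :=
      (hbddv v).intervalIntegrable_of_Icc hT.le
    have hi2 : IntervalIntegrable (fun s => (1 - mu0) • A.bdd s v) volume 0 T := hi'.smul _
    rw [intervalIntegral.integral_sub hi2 intervalIntegrable_const,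
      intervalIntegral.integral_smul, intervalIntegral.integral_const, hf]
    simp only [timeAvg, ContinuousLinearMap.smul_apply]
    rw [ContinuousLinearMap.intervalIntegral_apply hi]
    match_scalars <;> field_simp <;> ring
  rw [hval]
  refine (hknlam.smul hlim).congr (fun n => ?_)
  simp only [hFTC, smul_smul]
end
end

section
/- Let T>0, E a separable Banach space, V a Banach space densely and continuously embedded in E, and {A(t)}_{t∈[0,T]} a family of linear operators on E satisfying (Hyp'1) with constant ω>0 and (Hyp2)–(Hyp4). For μ∈[0,1] set A^{(μ)}(t) := −μI + (1−μ)A(t) and let {R^{(μ,λ)}(t,s)}_{0≤s≤t≤T} be the evolution system corresponding to {λA^{(μ)}(t)}_{t∈[0,T]} for λ>0. Let cl(A^{(μ0)}_0) denote the closure of the operator (1/T)∫_0^T A^{(μ0)}(τ)dτ (defined on V) and S_{cl(A^{(μ0)}_0)} the C0 semigroup it generates. If (k_n) is a sequence of positive integers and (λ_n)⊂(0,∞), (μ_n)⊂[0,1] satisfy k_n→∞, k_nλ_n→ε for some ε>0, and μ_n→μ0, then for every x∈E, λ_n (I + R^{(μ_n,λ_n)}(T,0) + … + R^{(μ_n,λ_n)}(T,0)^{k_n−1})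 x → (1/T) ∫_0^{εT} S_{cl(A^{(μ0)}_0)}(τ) x dτ as n→∞. -/
open Filter Topology Set MeasureTheory

noncomputable section

variable {E : Type*} [NormedAddCommGroup E] [NormedSpace ℝ E]

variable {V : Type*} [NormedAddCommGroup V] [NormedSpace ℝ V]

variable (ι : V →L[ℝ] E)

/-- Contractions converging on a dense range converge everywhere. -/
theorem tendsto_of_dense_contr {E : Type*} [NormedAddCommGroup E] [NormedSpace ℝ E]
    {V : Type*} (j : V → E) (hj : DenseRange j) (L : ℕ → E →L[ℝ] E) (hL : ∀ n, ‖L n‖ ≤ 1)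
    (M : E →L[ℝ] E) (h : ∀ v, Tendsto (fun n => L n (j v)) atTop (𝓝 (M (j v)))) (x : E) :
    Tendsto (fun n => L n x) atTop (𝓝 (M x)) := by
  rw [Metric.tendsto_atTop]
  intro e he
  have hpos : 0 < 1 + ‖M‖ + 1 := by positivity
  obtain ⟨v, hv⟩ := Metric.denseRange_iff.1 hj x (e / 2 / (1 + ‖M‖ + 1)) (by positivity)
  rw [dist_eq_norm] at hv
  obtain ⟨N, hN⟩ := Metric.tendsto_atTop.1 (h v) (e / 2) (by positivity)
  refine ⟨N, fun n hn => ?_⟩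
  have h1 := hN n hn
  rw [dist_eq_norm] at h1 ⊢
  have e1 : L n x - M x = L n (x - j v) + (L n (j v) - M (j v)) - M (x - j v) := by
    simp only [map_sub]; abel
  have h2 : ‖L n (x - j v)‖ ≤ 1 * ‖x - j v‖ := (L n).le_of_opNorm_le (hL n) _
  have h3 : ‖M (x - j v)‖ ≤ ‖M‖ * ‖x - j v‖ := M.le_opNorm _
  have h4 : ‖x - j v‖ * (1 + ‖M‖ + 1) < e / 2 := (lt_div_iff₀ hpos).1 hv
  have h5 := norm_sub_le (L n (x - j v) + (L n (j v) - M (j v))) (M (x - j v))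
  have h6 := norm_add_le (L n (x - j v)) (L n (j v) - M (j v))
  rw [e1]
  have := norm_nonneg (x - j v)
  nlinarith

theorem contr_pow {E : Type*} [NormedAddCommGroup E] [NormedSpace ℝ E]
    (B : E →L[ℝ] E) (hB : ‖B‖ ≤ 1) (m : ℕ) (x : E) : ‖(B ^ m) x‖ ≤ ‖x‖ := by
  induction m with
  | zero => simp
  | succ m ih =>
    rw [pow_succ', mul_apply_eq_comp]
    have := B.le_of_opNorm_le hB ((B ^ m) x)
    linarith

theorem contr_pow_sub {E : Type*} [NormedAddCommGroup E] [NormedSpace ℝ E]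
    (B : E →L[ℝ] E) (hB : ‖B‖ ≤ 1) (x : E) (C : ℝ) (hC : ‖B x - x‖ ≤ C) (m : ℕ) :
    ‖(B ^ m) x - x‖ ≤ m * C := by
  induction m with
  | zero => simp
  | succ m ih =>
    have e : (B ^ (m + 1)) x - x = (B ^ m) (B x - x) + ((B ^ m) x - x) := by
      rw [pow_succ, mul_apply_eq_comp, map_sub]; abel
    rw [e]
    have h1 := norm_add_le ((B ^ m) (B x - x)) ((B ^ m) x - x)
    have h2 := contr_pow B hB m (B x - x)
    rw [Nat.cast_add_one]
    linarith

theorem contr_pow_sub_pow {E : Type*} [NormedAddCommGroup E] [NormedSpace ℝ E]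
    (B : E →L[ℝ] E) (hB : ‖B‖ ≤ 1) (x : E) (C : ℝ) (hC : ‖B x - x‖ ≤ C) (m p : ℕ) :
    ‖(B ^ m) x - (B ^ p) x‖ ≤ |(m : ℝ) - p| * C := by
  wlog hmp : p ≤ m generalizing m p
  · rw [norm_sub_rev, abs_sub_comm]
    exact this p m (by omega)
  obtain ⟨d, rfl⟩ := Nat.exists_eq_add_of_le hmp
  have e : (B ^ (p + d)) x - (B ^ p) x = (B ^ p) ((B ^ d) x - x) := by
    rw [pow_add, mul_apply_eq_comp, map_sub]
  rw [e]
  have h1 := contr_pow B hB p ((B ^ d) x - x)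
  have h2 := contr_pow_sub B hB x C hC d
  have : |((p + d : ℕ) : ℝ) - p| = d := by
    push_cast; rw [add_sub_cancel_left]; exact abs_of_nonneg (Nat.cast_nonneg d)
  rw [this]; linarith

/-- Local consistency estimate with fixed operator. -/
theorem local_est {E : Type*} [NormedAddCommGroup E] [NormedSpace ℝ E]
    (B : E →L[ℝ] E) (hB : ‖B‖ ≤ 1) (h c d C : ℝ) (hh : 0 < h) (v g w y : E) (hC : 0 ≤ C)
    (h1 : ‖B v - v - h • g‖ ≤ h * c) (h2 : ‖g - y‖ ≤ c) (h3 : ‖w - y‖ ≤ c)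
    (h4 : ‖B w - w‖ ≤ h * C) (h5 : d * C ≤ c) (p : ℕ) (hp : p * h ≤ d) :
    ‖(B ^ p) v - v - ((p : ℝ) * h) • y‖ ≤ p * h * (5 * c) := by
  induction p with
  | zero => simp
  | succ p ih =>
    rw [Nat.cast_add_one] at hp ⊢
    have ih' := ih (by linarith)
    have e : (B ^ (p + 1)) v - v - (((p : ℝ) + 1) * h) • y
        = ((B ^ p) v - v - ((p : ℝ) * h) • y) + ((B ^ p) (B v - v - h • g)
          + h • ((B ^ p) (g - y) - (B ^ p) (w - y) + ((B ^ p) w - w) + (w - y))) := by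
      rw [pow_succ, mul_apply_eq_comp]
      simp only [map_sub, map_smul]
      module
    have b1 := contr_pow B hB p (B v - v - h • g)
    have b2 := contr_pow B hB p (g - y)
    have b3 := contr_pow B hB p (w - y)
    have b4 := contr_pow_sub B hB w (h * C) h4 p
    have b4' : (p : ℝ) * (h * C) ≤ c := by nlinarith
    have t4 : ‖(B ^ p) (g - y) - (B ^ p) (w - y) + ((B ^ p) w - w) + (w - y)‖ ≤ 4 * c := by
      have q1 := norm_add_le ((B ^ p) (g - y) - (B ^ p) (w - y) + ((B ^ p) w - w)) (w - y)
      have q2 := norm_add_le ((B ^ p) (g - y) - (B ^ p) (w - y)) ((B ^ p) w - w)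
      have q3 := norm_sub_le ((B ^ p) (g - y)) ((B ^ p) (w - y))
      linarith
    rw [e]
    refine (norm_add_le _ _).trans ?_
    have q5 := norm_add_le ((B ^ p) (B v - v - h • g))
      (h • ((B ^ p) (g - y) - (B ^ p) (w - y) + ((B ^ p) w - w) + (w - y)))
    rw [norm_smul, Real.norm_of_nonneg hh.le] at q5
    nlinarith

section Chernoff

theorem consist_bound {E : Type*} [NormedAddCommGroup E] [NormedSpace ℝ E]
    (B : ℕ → E →L[ℝ] E) (h : ℕ → ℝ) (hpos : ∀ n, 0 < h n) (x g : E)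
    (hc : Tendsto (fun n => (h n)⁻¹ • (B n x - x)) atTop (𝓝 g)) (c : ℝ) (c0 : 0 < c) :
    ∃ N, ∀ n ≥ N, ‖B n x - x - h n • g‖ ≤ h n * c := by
  obtain ⟨N, hN⟩ := Metric.tendsto_atTop.1 hc c c0
  refine ⟨N, fun n hn => ?_⟩
  have := (hN n hn).le
  rw [dist_eq_norm] at this
  have e : B n x - x - h n • g = h n • ((h n)⁻¹ • (B n x - x) - g) := by
    rw [smul_sub, smul_inv_smul₀ (hpos n).ne']
  rw [e, norm_smul, Real.norm_of_nonneg (hpos n).le]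
  exact mul_le_mul_of_nonneg_left this (hpos n).le

theorem consist_bound' {E : Type*} [NormedAddCommGroup E] [NormedSpace ℝ E]
    (B : ℕ → E →L[ℝ] E) (h : ℕ → ℝ) (hpos : ∀ n, 0 < h n) (x g : E)
    (hc : Tendsto (fun n => (h n)⁻¹ • (B n x - x)) atTop (𝓝 g)) :
    ∃ N, ∀ n ≥ N, ‖B n x - x‖ ≤ h n * (‖g‖ + 1) := by
  obtain ⟨N, hN⟩ := consist_bound B h hpos x g hc 1 one_pos
  refine ⟨N, fun n hn => ?_⟩
  have h1 := hN n hn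
  have e : B n x - x = (B n x - x - h n • g) + h n • g := by abel
  rw [e]
  refine (norm_add_le _ _).trans ?_
  rw [norm_smul, Real.norm_of_nonneg (hpos n).le]
  linarith

theorem local_consist {E : Type*} [NormedAddCommGroup E] [NormedSpace ℝ E]
    {V : Type*} (j : V → E) (hj : DenseRange j) (f : V → E)
    (B : ℕ → E →L[ℝ] E) (hB : ∀ n, ‖B n‖ ≤ 1) (h : ℕ → ℝ) (hpos : ∀ n, 0 < h n)
    (hc : ∀ v, Tendsto (fun n => (h n)⁻¹ • (B n (j v) - j v)) atTop (𝓝 (f v)))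
    (S : ℝ → E →L[ℝ] E) (z y : E) (hg : GenLimitAt S z y)
    (hcl : (z, y) ∈ closure (Set.range fun v => (j v, f v))) (c : ℝ) (c0 : 0 < c) :
    ∃ d0 > 0, ∀ d, 0 < d → d < d0 → ∃ N, ∃ r > 0, ∀ n ≥ N, ∀ p : ℕ, |p * h n - d| < r →
      ‖(B n ^ p) z - S d z‖ ≤ c * d := by
  obtain ⟨k, k0, hk⟩ : ∃ k, 0 < k ∧ c = 14 * k := ⟨c / 14, by positivity, by ring⟩
  obtain ⟨w, hw⟩ := Metric.denseRange_iff.1 hj y k k0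
  rw [dist_comm, dist_eq_norm] at hw
  obtain ⟨N1, hN1⟩ := consist_bound' B h hpos (j w) (f w) (hc w)
  set C := ‖f w‖ + 1 with hCdef
  have C0 : 0 < C := by positivity
  obtain ⟨d1, hd1, hd1'⟩ := Metric.tendsto_nhdsWithin_nhds.1 hg k k0
  refine ⟨min d1 (k / (2 * C)), lt_min hd1 (by positivity), fun d d0 hd => ?_⟩
  have hdd1 := hd.trans_le (min_le_left _ _)
  have hdd2 := hd.trans_le (min_le_right _ _)
  have hdC : 2 * d * C ≤ k := by
    rw [lt_div_iff₀ (by positivity)] at hdd2; nlinarith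
  have hS : ‖S d z - z - d • y‖ ≤ d * k := by
    have := hd1' (x := d) d0 (by simpa [abs_of_pos d0] using hdd1)
    rw [dist_eq_norm] at this
    have e : S d z - z - d • y = d • (d⁻¹ • (S d z - z) - y) := by
      rw [smul_sub, smul_inv_smul₀ d0.ne']
    rw [e, norm_smul, Real.norm_of_nonneg d0.le]
    exact mul_le_mul_of_nonneg_left this.le d0.le
  obtain ⟨_, ⟨v, rfl⟩, hv⟩ := Metric.mem_closure_iff.1 hcl (min (d * k) k) (by positivity)
  rw [Prod.dist_eq] at hv
  have hv1 : ‖z - j v‖ ≤ d * k := by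
    rw [← dist_eq_norm]
    exact (le_max_left _ _).trans (hv.le.trans (min_le_left _ _))
  have hv2 : ‖f v - y‖ ≤ k := by
    rw [norm_sub_rev, ← dist_eq_norm]
    exact (le_max_right _ _).trans (hv.le.trans (min_le_right _ _))
  obtain ⟨N2, hN2⟩ := consist_bound B h hpos (j v) (f v) (hc v) k k0
  refine ⟨max N1 N2, min d (d * k / (‖y‖ + 1)), lt_min d0 (by positivity), ?_⟩
  intro n hn p hp
  have hp1 := hp.trans_le (min_le_left _ _)
  have hp2 := hp.trans_le (min_le_right _ _)
  rw [lt_div_iff₀ (by positivity)] at hp2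
  have hph : p * h n ≤ 2 * d := by have := (abs_lt.1 hp1).2; linarith
  have key := local_est (B n) (hB n) (h n) k (2 * d) C (hpos n) (j v) (f v) (j w) y C0.le
    (hN2 n (le_of_max_le_right hn)) hv2 hw.le (hN1 n (le_of_max_le_left hn)) hdC p hph
  have e : (B n ^ p) z - S d z = (B n ^ p) (z - j v) - (z - j v)
      + ((B n ^ p) (j v) - j v - ((p : ℝ) * h n) • y) + ((p : ℝ) * h n - d) • y
      - (S d z - z - d • y) := by
    rw [map_sub]; module
  have b1 := contr_pow (B n) (hB n) p (z - j v)
  have b2 : ‖((p : ℝ) * h n - d) • y‖ ≤ d * k := by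
    rw [norm_smul, Real.norm_eq_abs]
    have := abs_nonneg ((p : ℝ) * h n - d)
    nlinarith
  have b3 : (p : ℝ) * h n * (5 * k) ≤ 2 * d * (5 * k) :=
    mul_le_mul_of_nonneg_right hph (by positivity)
  have q1 := norm_sub_le ((B n ^ p) (z - j v) - (z - j v)
      + ((B n ^ p) (j v) - j v - ((p : ℝ) * h n) • y) + ((p : ℝ) * h n - d) • y)
      (S d z - z - d • y)
  have q2 := norm_add_le ((B n ^ p) (z - j v) - (z - j v)
      + ((B n ^ p) (j v) - j v - ((p : ℝ) * h n) • y)) (((p : ℝ) * h n - d) • y)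
  have q3 := norm_add_le ((B n ^ p) (z - j v) - (z - j v))
      ((B n ^ p) (j v) - j v - ((p : ℝ) * h n) • y)
  have q4 := norm_sub_le ((B n ^ p) (z - j v)) (z - j v)
  rw [e, hk]
  linarith

theorem floor_tendsto (h : ℕ → ℝ) (hpos : ∀ n, 0 < h n) (h0 : Tendsto h atTop (𝓝 0))
    (s : ℝ) (hs : 0 ≤ s) : Tendsto (fun n => (⌊s / h n⌋₊ : ℝ) * h n) atTop (𝓝 s) := by
  have hl : Tendsto (fun n => s - h n) atTop (𝓝 s) := by
    simpa using tendsto_const_nhds.sub h0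
  refine tendsto_of_tendsto_of_tendsto_of_le_of_le hl tendsto_const_nhds ?_ ?_
  · intro n
    have := Nat.lt_floor_add_one (s / h n)
    rw [div_lt_iff₀ (hpos n)] at this
    simp only
    linarith
  · intro n
    have := Nat.floor_le (div_nonneg hs (hpos n).le)
    rwa [le_div_iff₀ (hpos n)] at this

theorem gen_orbit {E : Type*} [NormedAddCommGroup E] [NormedSpace ℝ E]
    (S : ℝ → E →L[ℝ] E) (hS : IsC0Semigroup S) (x y : E) (hg : GenLimitAt S x y) (s : ℝ)
    (hs : 0 ≤ s) : GenLimitAt S (S s x) (S s y) := by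
  have := ((S s).continuous.tendsto y).comp hg
  refine this.congr' ?_
  filter_upwards [self_mem_nhdsWithin] with t ht
  have ht' : 0 ≤ t := le_of_lt ht
  have e : S t (S s x) = S s (S t x) := by
    rw [← ContinuousLinearMap.comp_apply, ← ContinuousLinearMap.comp_apply,
      ← hS.map_add ht' hs, ← hS.map_add hs ht', add_comm]
  simp [e]

/-- Chernoff-type convergence on the core. -/
theorem chernoff_core {E : Type*} [NormedAddCommGroup E] [NormedSpace ℝ E]
    {V : Type*} (j : V → E) (hj : DenseRange j) (f : V → E)
    (B : ℕ → E →L[ℝ] E) (hB : ∀ n, ‖B n‖ ≤ 1) (h : ℕ → ℝ) (hpos : ∀ n, 0 < h n)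
    (h0 : Tendsto h atTop (𝓝 0))
    (hc : ∀ v, Tendsto (fun n => (h n)⁻¹ • (B n (j v) - j v)) atTop (𝓝 (f v)))
    (S : ℝ → E →L[ℝ] E) (hS : IsC0Semigroup S)
    (hV : ∀ v, ∃ y, GenLimitAt S (j v) y)
    (hcl : ∀ z y, GenLimitAt S z y → (z, y) ∈ closure (Set.range fun v => (j v, f v)))
    (v : V) (t : ℝ) (c : ℝ) (c0 : 0 < c) :
    ∀ s ∈ Icc 0 t, ∀ m : ℕ → ℕ, Tendsto (fun n => (m n : ℝ) * h n) atTop (𝓝 s) →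
      ∀ e > 0, ∀ᶠ n in atTop, ‖(B n ^ m n) (j v) - S s (j v)‖ ≤ c * s + e := by
  rcases lt_or_ge t 0 with ht | ht
  · intro s hs; exact absurd (hs.1.trans hs.2) (not_le.2 ht)
  set Q : Set ℝ := {s | ∀ m : ℕ → ℕ, Tendsto (fun n => (m n : ℝ) * h n) atTop (𝓝 s) →
      ∀ e > 0, ∀ᶠ n in atTop, ‖(B n ^ m n) (j v) - S s (j v)‖ ≤ c * s + e} with hQ
  obtain ⟨N, hN⟩ := consist_bound' B h hpos (j v) (f v) (hc v)
  set C := ‖f v‖ + 1 with hCdef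
  have C0 : 0 < C := by positivity
  obtain ⟨y, hy⟩ := hV v
  have hcontS := hS.strong_cont (j v)
  suffices Icc 0 t ⊆ Q from fun s hs => this hs
  apply IsClosed.Icc_subset_of_forall_exists_gt
  · -- closedness
    refine isClosed_of_closure_subset fun s hs => ?_
    have hsI : s ∈ Icc 0 t := by
      have := closure_mono (inter_subset_right) hs
      rwa [isClosed_Icc.closure_eq] at this
    refine ⟨?_, hsI⟩
    intro m hm e he
    have hcs : Tendsto (fun r => ‖S r (j v) - S s (j v)‖ + |s - r| * C + c * |s - r|)
        (𝓝[Q ∩ Icc 0 t] s) (𝓝 0) := by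
      have h1 : Tendsto (fun r => S r (j v)) (𝓝[Q ∩ Icc 0 t] s) (𝓝 (S s (j v))) :=
        (hcontS s hsI.1).mono_left (nhdsWithin_mono _ fun r hr => hr.2.1)
      have h2 : Tendsto (fun r : ℝ => |s - r|) (𝓝[Q ∩ Icc 0 t] s) (𝓝 0) := by
        have : Continuous fun r : ℝ => |s - r| := by fun_prop
        simpa using (this.tendsto s).mono_left nhdsWithin_le_nhds
      have := ((tendsto_iff_norm_sub_tendsto_zero.1 h1).add (h2.mul_const C)).add (h2.const_mul c)
      simpa using this
    have : (𝓝[Q ∩ Icc 0 t] s).NeBot := mem_closure_iff_nhdsWithin_neBot.1 hs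
    obtain ⟨r, hr1, hr2⟩ := ((hcs.eventually (gt_mem_nhds (show (0 : ℝ) < e / 3 by positivity))).and
      self_mem_nhdsWithin).exists
    have hfl := floor_tendsto h hpos h0 r hr2.2.1
    have hq := hr2.1 (fun n => ⌊r / h n⌋₊) hfl (e / 3) (by positivity)
    have hd : Tendsto (fun n => |(m n : ℝ) * h n - (⌊r / h n⌋₊ : ℝ) * h n| * C) atTop
        (𝓝 (|s - r| * C)) := ((hm.sub hfl).abs).mul_const C
    have hd' := hd.eventually (gt_mem_nhds (show |s - r| * C < |s - r| * C + e / 3 by linarith))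
    filter_upwards [hq, hd', eventually_ge_atTop N] with n a1 a2 a3
    have b1 := contr_pow_sub_pow (B n) (hB n) (j v) (h n * C) (hN n a3) (m n) ⌊r / h n⌋₊
    have b2 : |(m n : ℝ) - (⌊r / h n⌋₊ : ℝ)| * (h n * C)
        = |(m n : ℝ) * h n - (⌊r / h n⌋₊ : ℝ) * h n| * C := by
      rw [← sub_mul, abs_mul, abs_of_pos (hpos n)]; ring
    rw [b2] at b1
    have e1 : (B n ^ m n) (j v) - S s (j v)
        = ((B n ^ m n) (j v) - (B n ^ ⌊r / h n⌋₊) (j v))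
          + ((B n ^ ⌊r / h n⌋₊) (j v) - S r (j v)) + (S r (j v) - S s (j v)) := by abel
    rw [e1]
    refine (norm_add_le _ _).trans ?_
    have q := norm_add_le ((B n ^ m n) (j v) - (B n ^ ⌊r / h n⌋₊) (j v))
      ((B n ^ ⌊r / h n⌋₊) (j v) - S r (j v))
    have q2 : c * r ≤ c * s + c * |s - r| := by
      have : r ≤ s + |s - r| := by have := neg_abs_le (s - r); linarith
      nlinarith
    linarith
  · -- start
    intro m hm e he
    have hm' := (hm.mul_const C).eventually (gt_mem_nhds (show 0 * C < e by simpa using he))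
    filter_upwards [hm', eventually_ge_atTop N] with n a1 a2
    have := contr_pow_sub (B n) (hB n) (j v) (h n * C) (hN n a2) (m n)
    rw [hS.map_zero]
    simp only [one_apply_eq_self]
    nlinarith
  · rintro s ⟨hsQ, hsI⟩ b hb
    have hg := gen_orbit S hS _ _ hy s hsI.1
    obtain ⟨d0, hd0, hloc⟩ := local_consist j hj f B hB h hpos hc S _ _ hg (hcl _ _ hg) c c0
    have hb' : 0 < b - s := sub_pos.2 hb
    obtain ⟨d, hd1, hd2⟩ := exists_between (lt_min hd0 hb')
    obtain ⟨N1, r, hr, hest⟩ := hloc d hd1 (hd2.trans_le (min_le_left _ _))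
    have hdb := hd2.trans_le (min_le_right _ _)
    refine ⟨s + d, ?_, by linarith, by linarith⟩
    intro m hm e he
    have hfl := floor_tendsto h hpos h0 d hd1.le
    set p : ℕ → ℕ := fun n => min (m n) ⌊d / h n⌋₊ with hp
    have hpl : Tendsto (fun n => (p n : ℝ) * h n) atTop (𝓝 d) := by
      have := hm.min hfl
      rw [min_eq_right (by linarith [hsI.1])] at this
      refine this.congr fun n => ?_
      simp only [hp]
      rw [Nat.cast_min, min_mul_of_nonneg _ _ (hpos n).le]
    have hml : Tendsto (fun n => ((m n - p n : ℕ) : ℝ) * h n) atTop (𝓝 s) := by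
      have := hm.sub hpl
      rw [add_sub_cancel_right] at this
      refine this.congr fun n => ?_
      rw [Nat.cast_sub (min_le_left _ _)]; ring
    have hq := hsQ _ hml e he
    have hpr := Metric.tendsto_nhds.1 hpl r hr
    filter_upwards [hq, hpr, eventually_ge_atTop N1] with n a1 a2 a3
    rw [Real.dist_eq] at a2
    have a4 := hest n a3 (p n) a2
    have e1 : (B n ^ m n) (j v) - S (s + d) (j v)
        = (B n ^ p n) ((B n ^ (m n - p n)) (j v) - S s (j v))
          + ((B n ^ p n) (S s (j v)) - S d (S s (j v))) := by
      have e2 : m n = p n + (m n - p n) := by have : p n ≤ m n := min_le_left _ _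
                                              omega
      conv_lhs => rw [e2, pow_add, add_comm s d, hS.map_add hd1.le hsI.1]
      simp only [mul_apply_eq_comp, ContinuousLinearMap.comp_apply, map_sub]
      abel
    rw [e1]
    refine (norm_add_le _ _).trans ?_
    have := contr_pow (B n) (hB n) (p n) ((B n ^ (m n - p n)) (j v) - S s (j v))
    linarith

theorem chernoff_conv {E : Type*} [NormedAddCommGroup E] [NormedSpace ℝ E]
    {V : Type*} (j : V → E) (hj : DenseRange j) (f : V → E)
    (B : ℕ → E →L[ℝ] E) (hB : ∀ n, ‖B n‖ ≤ 1) (h : ℕ → ℝ) (hpos : ∀ n, 0 < h n)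
    (h0 : Tendsto h atTop (𝓝 0))
    (hc : ∀ v, Tendsto (fun n => (h n)⁻¹ • (B n (j v) - j v)) atTop (𝓝 (f v)))
    (S : ℝ → E →L[ℝ] E) (hS : IsC0Semigroup S)
    (hV : ∀ v, ∃ y, GenLimitAt S (j v) y)
    (hcl : ∀ z y, GenLimitAt S z y → (z, y) ∈ closure (Set.range fun v => (j v, f v)))
    (s : ℝ) (hs : 0 ≤ s) (m : ℕ → ℕ)
    (hm : Tendsto (fun n => (m n : ℝ) * h n) atTop (𝓝 s)) (x : E) :
    Tendsto (fun n => (B n ^ m n) x) atTop (𝓝 (S s x)) := by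
  refine tendsto_of_dense_contr j hj (fun n => B n ^ m n) (fun n => ?_) (S s) (fun v => ?_) x
  · exact ContinuousLinearMap.opNorm_le_bound _ zero_le_one fun x => by
      rw [one_mul]; exact contr_pow (B n) (hB n) _ x
  · rw [Metric.tendsto_nhds]
    intro e he
    have := chernoff_core j hj f B hB h hpos h0 hc S hS hV hcl v s (e / (4 * (s + 1)))
      (by positivity) s ⟨hs, le_rfl⟩ m hm (e / 4) (by positivity)
    filter_upwards [this] with n hn
    rw [dist_eq_norm]
    have : e / (4 * (s + 1)) * s ≤ e / 4 := by
      rw [div_mul_eq_mul_div, div_le_div_iff₀ (by positivity) (by positivity)]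
      nlinarith
    linarith

/-- A sum of powers is the integral of a step function. -/
theorem step_integral {E : Type*} [NormedAddCommGroup E] [NormedSpace ℝ E] [CompleteSpace E]
    (g : ℕ → E) (h : ℝ) (hpos : 0 < h) (k : ℕ) :
    ∫ τ in (0 : ℝ)..(k * h), g ⌊τ / h⌋₊ = h • ∑ i ∈ Finset.range k, g i := by
  have hpt : ∀ (i : ℕ), ∀ τ ∈ Ioo ((i : ℝ) * h) (((i + 1 : ℕ) : ℝ) * h), g ⌊τ / h⌋₊ = g i := by
    intro i τ hτ
    congr 1
    have i0 : (0 : ℝ) ≤ i := Nat.cast_nonneg i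
    have hτ0 : 0 ≤ τ / h := div_nonneg ((by positivity : (0 : ℝ) ≤ i * h).trans hτ.1.le) hpos.le
    rw [Nat.floor_eq_iff hτ0, le_div_iff₀ hpos, div_lt_iff₀ hpos]
    have := hτ.2
    push_cast at this
    exact ⟨hτ.1.le, this⟩
  have hle : ∀ i : ℕ, (i : ℝ) * h ≤ ((i + 1 : ℕ) : ℝ) * h := fun i => by
    push_cast; nlinarith
  have hint : ∀ i < k, IntervalIntegrable (fun τ => g ⌊τ / h⌋₊) volume
      ((i : ℝ) * h) (((i + 1 : ℕ) : ℝ) * h) := by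
    intro i _
    refine (intervalIntegrable_const (c := g i)).congr_ae ?_
    rw [uIoc_of_le (hle i), ← restrict_Ioo_eq_restrict_Ioc]
    filter_upwards [ae_restrict_mem measurableSet_Ioo] with τ hτ using (hpt i τ hτ).symm
  have hsum := intervalIntegral.sum_integral_adjacent_intervals
    (f := fun τ => g ⌊τ / h⌋₊) (μ := volume) (a := fun i : ℕ => (i : ℝ) * h) (n := k) hint
  simp only [Nat.cast_zero, zero_mul] at hsum
  rw [← hsum, Finset.smul_sum]
  refine Finset.sum_congr rfl fun i _ => ?_
  have : ∫ τ in ((i : ℝ) * h)..(((i + 1 : ℕ) : ℝ) * h), g ⌊τ / h⌋₊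
      = ∫ τ in ((i : ℝ) * h)..(((i + 1 : ℕ) : ℝ) * h), g i := by
    rw [intervalIntegral.integral_of_le (hle i), intervalIntegral.integral_of_le (hle i),
      ← restrict_Ioo_eq_restrict_Ioc]
    exact setIntegral_congr_fun measurableSet_Ioo fun τ hτ => hpt i τ hτ
  rw [this, intervalIntegral.integral_const]
  congr 1
  push_cast; ring

theorem step_aesm {E : Type*} [NormedAddCommGroup E] (g : ℕ → E) (h : ℝ) :
    StronglyMeasurable (fun τ : ℝ => g ⌊τ / h⌋₊) := by
  have h1 : StronglyMeasurable g := StronglyMeasurable.of_discrete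
  have h2 : Measurable fun τ : ℝ => ⌊τ / h⌋₊ := Nat.measurable_floor.comp (measurable_id.div_const h)
  exact h1.comp_measurable h2

theorem sum_conv {E : Type*} [NormedAddCommGroup E] [NormedSpace ℝ E] [CompleteSpace E]
    (B : ℕ → E →L[ℝ] E) (hB : ∀ n, ‖B n‖ ≤ 1) (h : ℕ → ℝ) (hpos : ∀ n, 0 < h n)
    (S : ℝ → E →L[ℝ] E) (x : E)
    (hconv : ∀ s, 0 ≤ s → Tendsto (fun n => (B n ^ ⌊s / h n⌋₊) x) atTop (𝓝 (S s x)))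
    (k : ℕ → ℕ) (a : ℝ) (ha : 0 < a) (hk : Tendsto (fun n => (k n : ℝ) * h n) atTop (𝓝 a)) :
    Tendsto (fun n => h n • (∑ i ∈ Finset.range (k n), B n ^ i) x) atTop
      (𝓝 (∫ τ in (0 : ℝ)..a, S τ x)) := by
  have hii : ∀ n b c, IntervalIntegrable (fun τ => (B n ^ ⌊τ / h n⌋₊) x) volume b c := by
    intro n b c
    refine (intervalIntegrable_const (c := ‖x‖)).mono_fun
      (step_aesm (fun i => (B n ^ i) x) (h n)).aestronglyMeasurable ?_
    filter_upwards with τ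
    rw [norm_norm]
    exact contr_pow (B n) (hB n) _ x
  have h1 : Tendsto (fun n => ∫ τ in (0 : ℝ)..a, (B n ^ ⌊τ / h n⌋₊) x) atTop
      (𝓝 (∫ τ in (0 : ℝ)..a, S τ x)) := by
    refine intervalIntegral.tendsto_integral_filter_of_dominated_convergence (fun _ => ‖x‖) ?_ ?_ ?_ ?_
    · filter_upwards with n
      exact (step_aesm (fun i => (B n ^ i) x) (h n)).aestronglyMeasurable
    · filter_upwards with n
      filter_upwards with τ _
      exact contr_pow (B n) (hB n) _ x
    · exact intervalIntegrable_const
    · filter_upwards with τ hτ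
      rw [uIoc_of_le ha.le] at hτ
      exact hconv τ hτ.1.le
  have h2 : Tendsto (fun n => ∫ τ in a..((k n : ℝ) * h n), (B n ^ ⌊τ / h n⌋₊) x) atTop (𝓝 0) := by
    have hz : Tendsto (fun n => ‖x‖ * |(k n : ℝ) * h n - a|) atTop (𝓝 0) := by
      have := ((hk.sub_const a).abs).const_mul ‖x‖
      simpa using this
    refine squeeze_zero_norm (fun n => ?_) hz
    exact intervalIntegral.norm_integral_le_of_norm_le_const fun τ _ => contr_pow (B n) (hB n) _ x
  have h3 := h1.add h2
  rw [add_zero] at h3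
  refine h3.congr fun n => ?_
  rw [intervalIntegral.integral_add_adjacent_intervals (hii n _ _) (hii n _ _),
    step_integral (fun i => (B n ^ i) x) (h n) (hpos n) (k n), sum_apply]

end Chernoff

section Evol

theorem gen_bound {E : Type*} [NormedAddCommGroup E] [NormedSpace ℝ E]
    {V : Type*} [NormedAddCommGroup V] [NormedSpace ℝ V] (ι b : V →L[ℝ] E) (K mu : ℝ)
    (hb : ‖b‖ ≤ K) (hmu : mu ∈ Icc (0 : ℝ) 1) (w : V) :
    ‖(1 - mu) • b w - mu • ι w‖ ≤ K * ‖w‖ + ‖ι w‖ := by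
  have h1 := b.le_of_opNorm_le hb w
  have h2 := norm_sub_le ((1 - mu) • b w) (mu • ι w)
  rw [norm_smul, norm_smul, Real.norm_of_nonneg hmu.1,
    Real.norm_of_nonneg (sub_nonneg.2 hmu.2)] at h2
  have := norm_nonneg (b w)
  have := norm_nonneg (ι w)
  have := hmu.1
  have := hmu.2
  nlinarith

theorem evol_norm_le {E : Type*} [NormedAddCommGroup E] [NormedSpace ℝ E]
    {V : Type*} [NormedAddCommGroup V] [NormedSpace ℝ V] (ι : V →L[ℝ] E) (T : ℝ)
    (b : ℝ → V →L[ℝ] E) (R : ℝ → ℝ → E →L[ℝ] E) (hR : IsDeterminedEvolSystem ι T b 1 0 R)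
    (s : ℝ) (hs : s ∈ Icc 0 T) : ‖R T s‖ ≤ 1 := by
  simpa using hR.2.1 s T hs.1 hs.2 le_rfl

theorem evol_near {E : Type*} [NormedAddCommGroup E] [NormedSpace ℝ E]
    {V : Type*} [NormedAddCommGroup V] [NormedSpace ℝ V] (ι : V →L[ℝ] E) (T : ℝ)
    (b : ℝ → V →L[ℝ] E) (R : ℝ → ℝ → E →L[ℝ] E) (hR : IsDeterminedEvolSystem ι T b 1 0 R)
    (w : V) (C : ℝ) (hC : ∀ s ∈ Icc 0 T, ‖b s w‖ ≤ C) (s : ℝ) (hs : s ∈ Icc 0 T) :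
    ‖R T s (ι w) - ι w‖ ≤ C * T := by
  have hT : T ∈ Icc 0 T := ⟨hs.1.trans hs.2, le_rfl⟩
  have hd : ∀ r ∈ Icc 0 T, HasDerivWithinAt (fun r => R T r (ι w)) (-(R T r (b r w)))
      (Icc 0 T) r := fun r hr => hR.2.2.2 w r T hr.1 hr.2 le_rfl
  have := Convex.norm_image_sub_le_of_norm_hasDerivWithin_le hd (C := C) (fun r hr => by
    rw [norm_neg]
    have := (R T r).le_of_opNorm_le (evol_norm_le ι T b R hR r hr) (b r w)
    linarith [hC r hr]) (convex_Icc _ _) hT hs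
  have e : R T T (ι w) = ι w := by rw [hR.1.refl T hT]; rfl
  simp only [e] at this
  refine this.trans ?_
  have C0 : 0 ≤ C := (norm_nonneg _).trans (hC s hs)
  refine mul_le_mul_of_nonneg_left ?_ C0
  rw [Real.norm_eq_abs, abs_le]
  constructor <;> linarith [hs.1, hs.2]

theorem evol_cont {E : Type*} [NormedAddCommGroup E] [NormedSpace ℝ E]
    {V : Type*} [NormedAddCommGroup V] [NormedSpace ℝ V] (ι : V →L[ℝ] E) (T : ℝ)
    (b : ℝ → V →L[ℝ] E) (R : ℝ → ℝ → E →L[ℝ] E) (hR : IsDeterminedEvolSystem ι T b 1 0 R)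
    (g : ℝ → E) (hg : ContinuousOn g (Icc 0 T)) :
    ContinuousOn (fun s => R T s (g s)) (Icc 0 T) := by
  intro s hs
  have h1 : ContinuousOn (fun r => R T r (g s)) (Icc 0 T) := by
    have := (hR.1.strong_cont (g s)).comp (f := fun r : ℝ => (T, r)) (s := Icc 0 T)
      (by fun_prop) (fun r hr => ⟨hr.1, hr.2, le_rfl⟩)
    exact this
  have h2 := h1 s hs
  have h3 := hg s hs
  unfold ContinuousWithinAt at h2 h3 ⊢
  have h4 : Tendsto (fun r => R T r (g r - g s)) (𝓝[Icc 0 T] s) (𝓝 0) := by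
    rw [tendsto_iff_norm_sub_tendsto_zero] at h3
    refine squeeze_zero_norm' ?_ h3
    filter_upwards [self_mem_nhdsWithin] with r hr
    have := (R T r).le_of_opNorm_le (evol_norm_le ι T b R hR r hr) (g r - g s)
    linarith
  have h5 := h4.add h2
  rw [zero_add] at h5
  refine h5.congr fun r => ?_
  rw [map_sub]; abel

theorem evol_ftc {E : Type*} [NormedAddCommGroup E] [NormedSpace ℝ E] [CompleteSpace E]
    {V : Type*} [NormedAddCommGroup V] [NormedSpace ℝ V] (ι : V →L[ℝ] E) (T : ℝ) (hT : 0 < T)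
    (b : ℝ → V →L[ℝ] E) (R : ℝ → ℝ → E →L[ℝ] E) (hR : IsDeterminedEvolSystem ι T b 1 0 R)
    (v : V) (hb : ContinuousOn (fun s => b s v) (Icc 0 T)) :
    R T 0 (ι v) - ι v = ∫ s in (0 : ℝ)..T, R T s (b s v) := by
  have hd : ∀ r ∈ Icc 0 T, HasDerivWithinAt (fun r => R T r (ι v)) (-(R T r (b r v)))
      (Icc 0 T) r := fun r hr => hR.2.2.2 v r T hr.1 hr.2 le_rfl
  have hc := evol_cont ι T b R hR _ hb
  have := intervalIntegral.integral_eq_sub_of_hasDerivAt_of_le hT.le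
    (f := fun r => R T r (ι v)) (f' := fun r => -(R T r (b r v)))
    (fun r hr => (hd r hr).continuousWithinAt)
    (fun r hr => (hd r (Ioo_subset_Icc_self hr)).hasDerivAt (Icc_mem_nhds hr.1 hr.2))
    (ContinuousOn.intervalIntegrable (by rw [uIcc_of_le hT.le]; exact hc.neg))
  rw [intervalIntegral.integral_neg] at this
  have e : R T T (ι v) = ι v := by rw [hR.1.refl T ⟨hT.le, le_rfl⟩]; rfl
  rw [e] at this
  rw [← neg_sub, ← this, neg_neg]

theorem evol_consist {E : Type*} [NormedAddCommGroup E] [NormedSpace ℝ E] [CompleteSpace E]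
    {V : Type*} [NormedAddCommGroup V] [NormedSpace ℝ V] (ι : V →L[ℝ] E) (hι : DenseRange ι)
    (T : ℝ) (hT : 0 < T) (b : ℝ → V →L[ℝ] E) (hb : ContinuousOn b (Icc 0 T))
    (K : ℝ) (hK : ∀ s ∈ Icc 0 T, ‖b s‖ ≤ K) (lam mu : ℕ → ℝ) (mu0 : ℝ)
    (hlam : ∀ n, 0 < lam n) (hmu : ∀ n, mu n ∈ Icc (0 : ℝ) 1)
    (hlam0 : Tendsto lam atTop (𝓝 0)) (hmu0 : Tendsto mu atTop (𝓝 mu0))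
    (R : ℕ → ℝ → ℝ → E →L[ℝ] E)
    (hR : ∀ n, IsDeterminedEvolSystem ι T
      (fun s => lam n • ((1 - mu n) • b s - mu n • ι)) 1 0 (R n)) (v : V) :
    Tendsto (fun n => (lam n * T)⁻¹ • (R n T 0 (ι v) - ι v)) atTop
      (𝓝 ((1 / T) • ∫ s in (0 : ℝ)..T, ((1 - mu0) • b s v - mu0 • ι v))) := by
  have hbv : ContinuousOn (fun s => b s v) (Icc 0 T) := hb.clm_apply continuousOn_const
  have hcn : ∀ n, ContinuousOn (fun s => (1 - mu n) • b s v - mu n • ι v) (Icc 0 T) := fun n =>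
    (hbv.const_smul _).sub continuousOn_const
  have hrepr : ∀ n, (lam n * T)⁻¹ • (R n T 0 (ι v) - ι v)
      = (1 / T) • ∫ s in (0 : ℝ)..T, R n T s ((1 - mu n) • b s v - mu n • ι v) := by
    intro n
    rw [evol_ftc ι T hT _ (R n) (hR n) v ((hcn n).const_smul (lam n))]
    simp only [smul_apply, sub_apply, map_smul]
    rw [intervalIntegral.integral_smul, smul_smul]
    congr 1
    have := (hlam n).ne'
    field_simp
  simp only [hrepr]
  refine Tendsto.const_smul ?_ (1 / T)
  have hid : ∀ s ∈ Icc 0 T, ∀ x, Tendsto (fun n => R n T s x) atTop (𝓝 x) := by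
    intro s hs x
    refine tendsto_of_dense_contr ι hι (fun n => R n T s)
      (fun n => evol_norm_le ι T _ (R n) (hR n) s hs) 1 (fun w => ?_) x
    rw [tendsto_iff_norm_sub_tendsto_zero]
    have hz : Tendsto (fun n => lam n * (K * ‖w‖ + ‖ι w‖) * T) atTop (𝓝 0) := by
      simpa using (hlam0.mul_const (K * ‖w‖ + ‖ι w‖)).mul_const T
    refine squeeze_zero (fun n => norm_nonneg _) (fun n => ?_) hz
    refine evol_near ι T _ (R n) (hR n) w _ (fun r hr => ?_) s hs
    simp only [smul_apply, sub_apply]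
    rw [norm_smul, Real.norm_of_nonneg (hlam n).le]
    exact mul_le_mul_of_nonneg_left (gen_bound ι (b r) K (mu n) (hK r hr) (hmu n) w) (hlam n).le
  refine intervalIntegral.tendsto_integral_filter_of_dominated_convergence
    (fun _ => K * ‖v‖ + ‖ι v‖) ?_ ?_ ?_ ?_
  · filter_upwards with n
    rw [uIoc_of_le hT.le]
    exact ((evol_cont ι T _ (R n) (hR n) _ (hcn n)).mono Ioc_subset_Icc_self).aestronglyMeasurable
      measurableSet_Ioc
  · filter_upwards with n
    filter_upwards with s hs
    rw [uIoc_of_le hT.le] at hs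
    have hs' := Ioc_subset_Icc_self hs
    have h1 := (R n T s).le_of_opNorm_le (evol_norm_le ι T _ (R n) (hR n) s hs')
      ((1 - mu n) • b s v - mu n • ι v)
    have h2 := gen_bound ι (b s) K (mu n) (hK s hs') (hmu n) v
    linarith
  · exact intervalIntegrable_const
  · filter_upwards with s hs
    rw [uIoc_of_le hT.le] at hs
    have hs' := Ioc_subset_Icc_self hs
    have h1 : Tendsto (fun n => (1 - mu n) • b s v - mu n • ι v) atTop
        (𝓝 ((1 - mu0) • b s v - mu0 • ι v)) :=
      ((hmu0.const_sub 1).smul_const _).sub (hmu0.smul_const _)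
    have h2 : Tendsto (fun n => R n T s (((1 - mu n) • b s v - mu n • ι v)
        - ((1 - mu0) • b s v - mu0 • ι v))) atTop (𝓝 0) := by
      rw [tendsto_iff_norm_sub_tendsto_zero] at h1
      refine squeeze_zero_norm (fun n => ?_) h1
      have := (R n T s).le_of_opNorm_le (evol_norm_le ι T _ (R n) (hR n) s hs')
        (((1 - mu n) • b s v - mu n • ι v) - ((1 - mu0) • b s v - mu0 • ι v))
      linarith
    have h3 := h2.add (hid s hs' ((1 - mu0) • b s v - mu0 • ι v))
    rw [zero_add] at h3
    refine h3.congr fun n => ?_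
    rw [map_sub (R n T s) ((1 - mu n) • b s v - mu n • ι v)]; abel

end Evol

/-- Lemma 5(iii): with `A^{(μ)}(t) := −μI + (1−μ)A(t)` and `R^{(μ,λ)}` the
evolution system of `{λA^{(μ)}(t)}`, if `kₙ → ∞`, `kₙλₙ → ε > 0` and `μₙ → μ₀`, then
`λₙ(I + R^{(μₙ,λₙ)}(T,0) + ⋯ + R^{(μₙ,λₙ)}(T,0)^{kₙ−1}) x → (1/T)∫₀^{εT} S_{cl(A₀^{(μ₀)})}(τ)x dτ`
for every `x ∈ E`. -/
theorem statement_12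
    {E : Type*} [NormedAddCommGroup E] [NormedSpace ℝ E] [CompleteSpace E]
    [TopologicalSpace.SeparableSpace E]
    {V : Type*} [NormedAddCommGroup V] [NormedSpace ℝ V] [CompleteSpace V]
    (ι : V →L[ℝ] E) (hιinj : Function.Injective ι) (hιdense : DenseRange ι)
    (T : ℝ) (hT : 0 < T)
    (A : HypData E V) (ω MV ωV : ℝ)
    (hgen : HypGen T A)
    (h1 : Hyp1' T A ω)
    (h2 : Hyp2 ι T A MV ωV)
    (h3 : Hyp3 ι T A)
    (h4 : Hyp4 ι T A ω)
    -- `RR mu lam` is the evolution system determined by `{λ A^{(μ)}(t)}`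
    (RR : ℝ → ℝ → ℝ → ℝ → E →L[ℝ] E)
    (hRR : ∀ mu ∈ Icc (0 : ℝ) 1, ∀ lam > (0 : ℝ),
      IsDeterminedEvolSystem ι T
        (fun s => lam • ((1 - mu) • A.bdd s - mu • ι)) 1 0 (RR mu lam))
    (mu0 : ℝ) (hmu0 : mu0 ∈ Icc (0 : ℝ) 1)
    -- `f` represents `A₀^{(μ₀)} = (1/T)∫₀ᵀ A^{(μ₀)}(τ)dτ` with domain `ι(V)`,
    -- `(D',A')` is its closure and `S` the C₀ semigroup generated by the closure
    (f : E → E)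
    (hf : ∀ v : V, f (ι v) = (1 - mu0) • timeAvg T A v - mu0 • ι v)
    (D' : Set E) (A' : E → E) (S : ℝ → E →L[ℝ] E)
    (hclos : IsClosureOf D' A' (Set.range ι) f)
    (hS : IsC0Semigroup S) (hgenS : IsGeneratorOf D' A' S)
    -- the sequences
    (kn : ℕ → ℕ) (lamn mun : ℕ → ℝ) (ε : ℝ) (hε : 0 < ε)
    (hlampos : ∀ n, 0 < lamn n) (hmun : ∀ n, mun n ∈ Icc (0 : ℝ) 1)
    (hkn : Tendsto kn atTop atTop)
    (hknlam : Tendsto (fun n => (kn n : ℝ) * lamn n) atTop (𝓝 ε))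
    (hmu : Tendsto mun atTop (𝓝 mu0)) :
    ∀ x : E, Tendsto
      (fun n => lamn n • (∑ i ∈ Finset.range (kn n), RR (mun n) (lamn n) T 0 ^ i) x)
      atTop (𝓝 ((1 / T) • ∫ τ in (0 : ℝ)..(ε * T), S τ x)) := by
  obtain ⟨K, hK⟩ := isCompact_Icc.exists_bound_of_continuousOn h3.2
  have hk0 : ∀ᶠ n in atTop, kn n ≠ 0 := by
    filter_upwards [hkn.eventually (eventually_ge_atTop 1)] with n hn; omega
  have hlam0 : Tendsto lamn atTop (𝓝 0) := by
    have := hknlam.mul ((tendsto_inv_atTop_zero (𝕜 := ℝ)).comp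
      (tendsto_natCast_atTop_atTop.comp hkn))
    rw [mul_zero] at this
    refine this.congr' ?_
    filter_upwards [hk0] with n hn
    have : (kn n : ℝ) ≠ 0 := Nat.cast_ne_zero.2 hn
    simp only [Function.comp_apply]
    field_simp
  set h : ℕ → ℝ := fun n => lamn n * T with hh
  have hpos : ∀ n, 0 < h n := fun n => mul_pos (hlampos n) hT
  have h0 : Tendsto h atTop (𝓝 0) := by simpa using hlam0.mul_const T
  have hdet := fun n => hRR (mun n) (hmun n) (lamn n) (hlampos n)
  have hB : ∀ n, ‖RR (mun n) (lamn n) T 0‖ ≤ 1 := fun n => by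
    simpa using (hdet n).2.1 0 T le_rfl hT.le le_rfl
  have hc := evol_consist ι hιdense T hT A.bdd h3.2 K hK lamn mun mu0 hlampos hmun hlam0 hmu
    (fun n => RR (mun n) (lamn n)) hdet
  have hgr : opGraph (Set.range ι) f = Set.range fun v => (ι v, f (ι v)) := by
    ext ⟨a, b⟩
    simp only [opGraph, Set.mem_setOf_eq, Set.mem_range, Prod.mk.injEq]
    constructor
    · rintro ⟨⟨v, rfl⟩, rfl⟩; exact ⟨v, rfl, rfl⟩
    · rintro ⟨v, rfl, rfl⟩; exact ⟨⟨v, rfl⟩, rfl⟩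
  have hcl : ∀ z y, GenLimitAt S z y →
      (z, y) ∈ closure (Set.range fun v => (ι v, f (ι v))) := by
    intro z y hzy
    have hz : z ∈ D' := (hgenS.1 z).2 ⟨y, hzy⟩
    have : y = A' z := tendsto_nhds_unique hzy (hgenS.2 z hz)
    rw [this, ← hgr]
    exact hclos.2 z hz
  have hV : ∀ v, ∃ y, GenLimitAt S (ι v) y := by
    intro v
    refine (hgenS.1 _).1 ((hclos.1 _).2 ⟨f (ι v), subset_closure ?_⟩)
    exact ⟨⟨v, rfl⟩, rfl⟩
  have hc' : ∀ v, Tendsto (fun n => (h n)⁻¹ • (RR (mun n) (lamn n) T 0 (ι v) - ι v)) atTop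
      (𝓝 (f (ι v))) := by
    intro v
    have := hc v
    rw [hf v]
    have hint : IntervalIntegrable A.bdd volume 0 T :=
      ContinuousOn.intervalIntegrable (by rw [uIcc_of_le hT.le]; exact h3.2)
    have e : (1 - mu0) • timeAvg T A v - mu0 • ι v
        = (1 / T) • ∫ s in (0 : ℝ)..T, ((1 - mu0) • A.bdd s v - mu0 • ι v) := by
      have hint' : IntervalIntegrable (fun s => A.bdd s v) volume 0 T :=
        ContinuousOn.intervalIntegrable (by
          rw [uIcc_of_le hT.le]
          exact h3.2.clm_apply continuousOn_const)
      have hint2 : IntervalIntegrable (fun s => (1 - mu0) • A.bdd s v) volume 0 T :=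
        hint'.smul (1 - mu0)
      rw [intervalIntegral.integral_sub hint2 intervalIntegrable_const,
        intervalIntegral.integral_smul, intervalIntegral.integral_const, timeAvg,
        smul_apply, ← ContinuousLinearMap.intervalIntegral_apply hint v,
        smul_sub, sub_zero, smul_smul (1 / T) T, one_div, inv_mul_cancel₀ hT.ne', one_smul,
        smul_comm]
    rw [e]
    exact this
  intro x
  have hconv : ∀ s, 0 ≤ s → Tendsto (fun n => (RR (mun n) (lamn n) T 0 ^ ⌊s / h n⌋₊) x) atTop
      (𝓝 (S s x)) := fun s hs =>
    chernoff_conv ι hιdense (fun v => f (ι v)) (fun n => RR (mun n) (lamn n) T 0) hB h hpos h0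
      hc' S hS hV hcl s hs _ (floor_tendsto h hpos h0 s hs) x
  have hkh : Tendsto (fun n => (kn n : ℝ) * h n) atTop (𝓝 (ε * T)) := by
    refine (hknlam.mul_const T).congr fun n => ?_
    simp only [hh]; ring
  have hfin := (sum_conv (fun n => RR (mun n) (lamn n) T 0) hB h hpos S x hconv kn (ε * T)
    (by positivity) hkh).const_smul (1 / T)
  refine hfin.congr fun n => ?_
  rw [smul_smul]
  congr 1
  simp only [hh]
  field_simp
end
end

section
/- Let T>0, E a separable Banach space, V a Banach space densely and continuously embedded in E, {A(t)}_{t∈[0,T]} a family of linear operators on E satisfying (Hyp'1) with constant ω>0 and (Hyp2)–(Hyp5), and F:[0,T]×E→E a continuous map satisfying (F1)–(F4) with k∈[0,ω). For λ>0 and x∈E let u(·;x,λ) be the unique mild solution of u'(t)=λA(t)u(t)+λF(t,u(t)) on [0,T] with u(0)=x, and set Φ_T^{(λ)}(x):=u(T;x,λ). Call x₀∈E a branching point if there exist sequences (x_n) in E and (λ_n) in (0,∞) with λ_n→0, x_n→x₀ and Φ_T^{(λ_n)}(x_n)=x_n for all n. Let Â be the closure of A_0 := (1/T)∫_0^T A(τ)dτ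 (with domain V) and define F̂:E→E by F̂(x) := (1/T)∫_0^T F(τ,x)dτ. Then every branching point x₀ belongs to D(Â) and satisfies Âx₀ + F̂(x₀) = 0. -/
open Filter Topology Set MeasureTheory

noncomputable section

variable {E : Type*} [NormedAddCommGroup E] [NormedSpace ℝ E]

variable {V : Type*} [NormedAddCommGroup V] [NormedSpace ℝ V]

variable (ι : V →L[ℝ] E)

section Helpers

variable {E : Type*} [NormedAddCommGroup E] [NormedSpace ℝ E]
variable {V : Type*} [NormedAddCommGroup V] [NormedSpace ℝ V]

/-- contraction property of the determined evolution system -/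
theorem aux_norm_le {T lam ω : ℝ} {ι : V →L[ℝ] E} {B : ℝ → V →L[ℝ] E}
    {R : ℝ → ℝ → E →L[ℝ] E} (hl : 0 < lam) (hω : 0 < ω)
    (hR : IsDeterminedEvolSystem ι T B 1 (-(lam * ω)) R)
    {s t : ℝ} (hs : 0 ≤ s) (hst : s ≤ t) (ht : t ≤ T) (x : E) : ‖R t s x‖ ≤ ‖x‖ := by
  have h := hR.2.1 s t hs hst ht
  have h2 : Real.exp (-(lam * ω) * (t - s)) ≤ 1 := by
    apply Real.exp_le_one_iff.2
    have : 0 ≤ (lam * ω) * (t - s) := mul_nonneg (mul_pos hl hω).le (by linarith)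
    linarith
  calc ‖R t s x‖ ≤ ‖R t s‖ * ‖x‖ := (R t s).le_opNorm x
    _ ≤ 1 * ‖x‖ := by gcongr; linarith
    _ = ‖x‖ := one_mul _

/-- continuity of `s ↦ R(t,s) g(s)` -/
theorem aux_cont {T lam ω : ℝ} {ι : V →L[ℝ] E} {B : ℝ → V →L[ℝ] E}
    {R : ℝ → ℝ → E →L[ℝ] E} (hl : 0 < lam) (hω : 0 < ω)
    (hR : IsDeterminedEvolSystem ι T B 1 (-(lam * ω)) R)
    {t : ℝ} (ht : t ∈ Icc 0 T) (g : ℝ → E) (hg : ContinuousOn g (Icc 0 T)) :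
    ContinuousOn (fun s => R t s (g s)) (Icc 0 t) := by
  intro s hs
  have h1 : Tendsto (fun r => R t r (g s)) (𝓝[Icc 0 t] s) (𝓝 (R t s (g s))) := by
    have hc := hR.1.strong_cont (g s)
    have : ContinuousOn (fun r => R t r (g s)) (Icc 0 t) :=
      hc.comp (f := fun r : ℝ => (t, r)) (by fun_prop) (fun r hr => ⟨hr.1, hr.2, ht.2⟩)
    exact this s hs
  have h2 : Tendsto (fun r => R t r (g r) - R t r (g s)) (𝓝[Icc 0 t] s) (𝓝 0) := by
    have hg' : Tendsto g (𝓝[Icc 0 t] s) (𝓝 (g s)) :=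
      (hg s ⟨hs.1, hs.2.trans ht.2⟩).mono_left
        (nhdsWithin_mono _ (Icc_subset_Icc le_rfl ht.2))
    have hg2 : Tendsto (fun r => ‖g r - g s‖) (𝓝[Icc 0 t] s) (𝓝 0) := by
      simpa using (hg'.sub_const (g s)).norm
    refine squeeze_zero_norm' ?_ hg2
    filter_upwards [self_mem_nhdsWithin] with r hr
    rw [← map_sub]
    exact aux_norm_le hl hω hR hr.1 hr.2 ht.2 _
  have := h2.add h1
  simp only [sub_add_cancel, zero_add] at this
  exact this

/-- `R^{(λ)}(t,s) x → x` for `λ → 0⁺` -/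
theorem aux_tendsto {T ω : ℝ} {ι : V →L[ℝ] E} (hι : DenseRange ι) {B : ℝ → V →L[ℝ] E}
    (hB : ContinuousOn B (Icc 0 T)) (hω : 0 < ω) {RR : ℝ → ℝ → ℝ → E →L[ℝ] E}
    (hRR : ∀ lam > (0 : ℝ),
      IsDeterminedEvolSystem ι T (fun s => lam • B s) 1 (-(lam * ω)) (RR lam))
    {ln : ℕ → ℝ} (hlnpos : ∀ n, 0 < ln n) (hln : Tendsto ln atTop (𝓝 0))
    {s t : ℝ} (hs : 0 ≤ s) (hst : s ≤ t) (ht : t ≤ T) (x : E) :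
    Tendsto (fun n => RR (ln n) t s x) atTop (𝓝 x) := by
  -- on the dense subspace
  have hV : ∀ v : V, Tendsto (fun n => RR (ln n) t s (ι v)) atTop (𝓝 (ι v)) := by
    intro v
    obtain ⟨C, hC⟩ := isCompact_Icc.exists_bound_of_continuousOn
      (f := fun r => B r v) (s := Icc 0 T) (hB.clm_apply continuousOn_const)
    rw [tendsto_iff_norm_sub_tendsto_zero]
    have hz : Tendsto (fun n => (ln n * C) * ‖s - t‖) atTop (𝓝 0) := by
      simpa using (hln.mul_const C).mul_const ‖s - t‖
    refine squeeze_zero (fun _ => norm_nonneg _) (fun n => ?_) hz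
    have hR := hRR (ln n) (hlnpos n)
    have key := (convex_Icc (0:ℝ) t).norm_image_sub_le_of_norm_hasDerivWithin_le
      (f := fun r => RR (ln n) t r (ι v))
      (f' := fun r => -(RR (ln n) t r ((ln n • B r) v))) (C := ln n * C)
      (fun r hr => hR.2.2.2 v r t hr.1 hr.2 ht)
      (fun r hr => by
        rw [norm_neg]
        refine (aux_norm_le (hlnpos n) hω hR hr.1 hr.2 ht _).trans ?_
        rw [ContinuousLinearMap.smul_apply, norm_smul, Real.norm_of_nonneg (hlnpos n).le]
        exact mul_le_mul_of_nonneg_left (hC r ⟨hr.1, hr.2.trans ht⟩) (hlnpos n).le)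
      (x := t) (y := s) ⟨hs.trans hst, le_rfl⟩ ⟨hs, hst⟩
    simpa [hR.1.refl t ⟨hs.trans hst, ht⟩] using key
  rw [Metric.tendsto_atTop]
  intro ε hε
  obtain ⟨v, hv⟩ := hι.exists_dist_lt x (show 0 < ε / 3 by positivity)
  obtain ⟨N, hN⟩ := Metric.tendsto_atTop.1 (hV v) (ε / 3) (by positivity)
  refine ⟨N, fun n hn => ?_⟩
  have h1 := hN n hn
  have h2 : dist (RR (ln n) t s x) (RR (ln n) t s (ι v)) ≤ dist x (ι v) := by
    rw [dist_eq_norm, dist_eq_norm, ← map_sub]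
    exact aux_norm_le (hlnpos n) hω (hRR _ (hlnpos n)) hs hst ht _
  have h3 := dist_triangle4 (RR (ln n) t s x) (RR (ln n) t s (ι v)) (ι v) x
  rw [dist_comm (ι v) x] at h3
  linarith

/-- varying vectors -/
theorem aux_tendsto' {T ω : ℝ} {ι : V →L[ℝ] E} (hι : DenseRange ι) {B : ℝ → V →L[ℝ] E}
    (hB : ContinuousOn B (Icc 0 T)) (hω : 0 < ω) {RR : ℝ → ℝ → ℝ → E →L[ℝ] E}
    (hRR : ∀ lam > (0 : ℝ),
      IsDeterminedEvolSystem ι T (fun s => lam • B s) 1 (-(lam * ω)) (RR lam))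
    {ln : ℕ → ℝ} (hlnpos : ∀ n, 0 < ln n) (hln : Tendsto ln atTop (𝓝 0))
    {s t : ℝ} (hs : 0 ≤ s) (hst : s ≤ t) (ht : t ≤ T) {x : E} {xn : ℕ → E}
    (hx : Tendsto xn atTop (𝓝 x)) :
    Tendsto (fun n => RR (ln n) t s (xn n)) atTop (𝓝 x) := by
  have h1 := aux_tendsto hι hB hω hRR hlnpos hln hs hst ht x
  have h2 : Tendsto (fun n => RR (ln n) t s (xn n) - RR (ln n) t s x) atTop (𝓝 0) := by
    have hg2 : Tendsto (fun n => ‖xn n - x‖) atTop (𝓝 0) := by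
      simpa using (hx.sub_const x).norm
    refine squeeze_zero_norm (fun n => ?_) hg2
    rw [← map_sub]
    exact aux_norm_le (hlnpos n) hω (hRR _ (hlnpos n)) hs hst ht _
  simpa using h2.add h1

/-- convergence of the integrals -/
theorem aux_integral {T ω : ℝ} (hT : 0 < T) {ι : V →L[ℝ] E} (hι : DenseRange ι)
    {B : ℝ → V →L[ℝ] E}
    (hB : ContinuousOn B (Icc 0 T)) (hω : 0 < ω) {RR : ℝ → ℝ → ℝ → E →L[ℝ] E}
    (hRR : ∀ lam > (0 : ℝ),
      IsDeterminedEvolSystem ι T (fun s => lam • B s) 1 (-(lam * ω)) (RR lam))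
    {ln : ℕ → ℝ} (hlnpos : ∀ n, 0 < ln n) (hln : Tendsto ln atTop (𝓝 0))
    (g : ℝ → E) (gn : ℕ → ℝ → E) (hgn : ∀ n, ContinuousOn (gn n) (Icc 0 T))
    (hlim : ∀ s ∈ Icc 0 T, Tendsto (fun n => gn n s) atTop (𝓝 (g s)))
    (C : ℝ) (hC : ∀ᶠ n in atTop, ∀ s ∈ Icc 0 T, ‖gn n s‖ ≤ C) :
    Tendsto (fun n => ∫ s in (0:ℝ)..T, RR (ln n) T s (gn n s)) atTop
      (𝓝 (∫ s in (0:ℝ)..T, g s)) := by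
  have hsub : Set.uIoc (0:ℝ) T ⊆ Icc 0 T := by
    rw [uIoc_of_le hT.le]; exact Ioc_subset_Icc_self
  refine intervalIntegral.tendsto_integral_filter_of_dominated_convergence (fun _ => C)
    ?_ ?_ intervalIntegrable_const ?_
  · refine Eventually.of_forall fun n => ?_
    have := aux_cont (hlnpos n) hω (hRR _ (hlnpos n)) (t := T) ⟨hT.le, le_rfl⟩ _ (hgn n)
    exact (this.mono hsub).aestronglyMeasurable measurableSet_uIoc
  · filter_upwards [hC] with n hn
    refine Eventually.of_forall fun s hs => ?_
    have hs' := hsub hs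
    exact (aux_norm_le (hlnpos n) hω (hRR _ (hlnpos n)) hs'.1 hs'.2 le_rfl _).trans (hn s hs')
  · refine Eventually.of_forall fun s hs => ?_
    have hs' := hsub hs
    exact aux_tendsto' hι hB hω hRR hlnpos hln hs'.1 hs'.2 le_rfl (hlim s hs')

/-- dissipativity estimate -/
theorem aux_lower {a θ μ : ℝ} (ha : 0 < a) (R : E →L[ℝ] E) (hR : ‖R‖ ≤ θ) (x : E) :
    (μ + a * (1 - θ)) * ‖x‖ ≤ ‖μ • x - a • (R x - x)‖ := by
  have h1 : μ • x - a • (R x - x) = (μ + a) • x - a • R x := by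
    rw [smul_sub, add_smul]; abel
  have h2 : ‖R x‖ ≤ θ * ‖x‖ :=
    (R.le_opNorm x).trans (mul_le_mul_of_nonneg_right hR (norm_nonneg _))
  have h3 : (μ + a) * ‖x‖ ≤ ‖(μ + a) • x‖ := by
    rw [norm_smul]
    exact mul_le_mul_of_nonneg_right (le_abs_self _) (norm_nonneg _)
  have h4 : ‖a • R x‖ ≤ a * (θ * ‖x‖) := by
    rw [norm_smul, Real.norm_of_nonneg ha.le]
    exact mul_le_mul_of_nonneg_left h2 ha.le
  rw [h1]
  have := norm_sub_norm_le ((μ + a) • x) (a • R x)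
  nlinarith

/-- exponential estimate -/
theorem aux_exp {a ω : ℝ} (ha : 0 < a) (hω : 0 < ω) :
    ω / (1 + ω / a) ≤ a * (1 - Real.exp (-(ω / a))) := by
  have hz : 0 < ω / a := div_pos hω ha
  have h1 : Real.exp (-(ω / a)) ≤ 1 / (1 + ω / a) := by
    rw [Real.exp_neg, ← one_div]
    apply one_div_le_one_div_of_le (by positivity)
    have := Real.add_one_le_exp (ω / a)
    linarith
  have h2 : ω / (1 + ω / a) = a * (1 - 1 / (1 + ω / a)) := by
    field_simp
    ring
  rw [h2]
  gcongr

/-- abstract convergence argument -/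
theorem aux_abstract {ι A0 : V →L[ℝ] E} (hι : DenseRange ι) {ω μ0 : ℝ} (hω : 0 < ω)
    (hμ : -ω < μ0) (hd : Dense (Set.range fun v : V => μ0 • ι v - A0 v))
    (a : ℕ → ℝ) (ha : ∀ n, 0 < a n) (hainf : Tendsto (fun n => ω / a n) atTop (𝓝 0))
    (R : ℕ → E →L[ℝ] E) (hR : ∀ n, ‖R n‖ ≤ Real.exp (-(ω / a n)))
    (hA : ∀ v, Tendsto (fun n => a n • (R n (ι v) - ι v)) atTop (𝓝 (A0 v)))
    (xn : ℕ → E) (x0 y : E) (hx : Tendsto xn atTop (𝓝 x0))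
    (hy : Tendsto (fun n => a n • (R n (xn n) - xn n)) atTop (𝓝 (-y)))
    (f : E → E) (hf : ∀ v : V, f (ι v) = A0 v)
    (D' : Set E) (A' : E → E) (hclos : IsClosureOf D' A' (Set.range ι) f) :
    x0 ∈ D' ∧ A' x0 + y = 0 := by
  have hG : opGraph (Set.range ι) f = (LinearMap.range (ι.prod A0).toLinearMap : Set (E × E)) := by
    ext p
    constructor
    · rintro ⟨⟨v, hv⟩, hp⟩
      refine ⟨v, Prod.ext hv ?_⟩
      rw [hp, ← hv, hf]; rfl
    · rintro ⟨v, rfl⟩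
      exact ⟨⟨v, rfl⟩, (hf v).symm⟩
  set G : Submodule ℝ (E × E) := LinearMap.range (ι.prod A0).toLinearMap with hGdef
  have hGc : closure (opGraph (Set.range ι) f) = (G.topologicalClosure : Set (E × E)) := by
    rw [hG, Submodule.topologicalClosure_coe]
  have low : ∀ n (μ : ℝ) (x : E),
      (μ + ω / (1 + ω / a n)) * ‖x‖ ≤ ‖μ • x - a n • (R n x - x)‖ := fun n μ x =>
    le_trans (mul_le_mul_of_nonneg_right (by have := aux_exp (ha n) hω; linarith)
      (norm_nonneg _)) (aux_lower (ha n) (R n) (hR n) x)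
  have hlimω : Tendsto (fun n => ω / (1 + ω / a n)) atTop (𝓝 ω) := by
    have : Tendsto (fun n => ω / (1 + ω / a n)) atTop (𝓝 (ω / (1 + 0))) :=
      tendsto_const_nhds.div (tendsto_const_nhds.add hainf) (by norm_num)
    simpa using this
  -- the main inequality
  have main : ∀ v, (μ0 + ω) * ‖ι v - x0‖ ≤ ‖(μ0 • ι v - A0 v) - (μ0 • x0 + y)‖ := by
    intro v
    have l1 : Tendsto (fun n => (μ0 + ω / (1 + ω / a n)) * ‖ι v - xn n‖) atTop
        (𝓝 ((μ0 + ω) * ‖ι v - x0‖)) :=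
      (tendsto_const_nhds.add hlimω).mul (tendsto_const_nhds.sub hx).norm
    have l2 : Tendsto (fun n => ‖(μ0 • ι v - a n • (R n (ι v) - ι v)) -
        (μ0 • xn n - a n • (R n (xn n) - xn n))‖) atTop
        (𝓝 (‖(μ0 • ι v - A0 v) - (μ0 • x0 - -y)‖)) :=
      ((tendsto_const_nhds.sub (hA v)).sub ((hx.const_smul μ0).sub hy)).norm
    rw [sub_neg_eq_add] at l2
    refine le_of_tendsto_of_tendsto' l1 l2 fun n => ?_
    have he : (μ0 • ι v - a n • (R n (ι v) - ι v)) - (μ0 • xn n - a n • (R n (xn n) - xn n))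
        = μ0 • (ι v - xn n) - a n • (R n (ι v - xn n) - (ι v - xn n)) := by
      rw [map_sub]; simp only [smul_sub]; abel
    rw [he]
    exact low n μ0 (ι v - xn n)
  have hμω : 0 < μ0 + ω := by linarith
  have hmem : (x0, -y) ∈ G.topologicalClosure := by
    change (x0, -y) ∈ (G.topologicalClosure : Set (E × E))
    rw [Submodule.topologicalClosure_coe, mem_closure_iff_seq_limit]
    obtain ⟨w, hw, hwl⟩ := mem_closure_iff_seq_limit.1 (hd (μ0 • x0 + y))
    choose v hv using hw
    have hwl' : Tendsto (fun j => μ0 • ι (v j) - A0 (v j)) atTop (𝓝 (μ0 • x0 + y)) := by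
      simpa only [hv] using hwl
    have hvx : Tendsto (fun j => ι (v j)) atTop (𝓝 x0) := by
      rw [tendsto_iff_norm_sub_tendsto_zero]
      have h0 : Tendsto (fun j => ‖(μ0 • ι (v j) - A0 (v j)) - (μ0 • x0 + y)‖ / (μ0 + ω))
          atTop (𝓝 0) := by
        have := (tendsto_iff_norm_sub_tendsto_zero.1 hwl').div_const (μ0 + ω)
        simpa using this
      refine squeeze_zero (fun _ => norm_nonneg _) (fun j => ?_) h0
      rw [le_div_iff₀ hμω, mul_comm]
      exact main (v j)
    have hAv : Tendsto (fun j => A0 (v j)) atTop (𝓝 (-y)) := by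
      have := (hvx.const_smul μ0).sub hwl'
      simpa using this
    exact ⟨fun j => (ι (v j), A0 (v j)), fun j => ⟨v j, rfl⟩, hvx.prodMk_nhds hAv⟩
  -- dissipativity on the closure
  have diss : ∀ p ∈ G.topologicalClosure, ∀ μ : ℝ, μ * ‖p.1‖ ≤ ‖μ • p.1 - p.2‖ := by
    intro p hp μ
    have hcl : IsClosed {p : E × E | μ * ‖p.1‖ ≤ ‖μ • p.1 - p.2‖} :=
      isClosed_le (by fun_prop) (by fun_prop)
    have hsub : (G : Set (E × E)) ⊆ {p : E × E | μ * ‖p.1‖ ≤ ‖μ • p.1 - p.2‖} := by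
      rintro _ ⟨v, rfl⟩
      change μ * ‖ι v‖ ≤ ‖μ • ι v - A0 v‖
      refine le_of_tendsto_of_tendsto' tendsto_const_nhds
        (tendsto_const_nhds.sub (hA v)).norm fun n => ?_
      refine le_trans (mul_le_mul_of_nonneg_right ?_ (norm_nonneg _)) (low n μ (ι v))
      have : 0 < ω / (1 + ω / a n) := by have := ha n; positivity
      linarith
    exact closure_minimal hsub hcl hp
  have hx0 : x0 ∈ D' := (hclos.1 x0).2 ⟨-y, by rw [hGc]; exact hmem⟩
  refine ⟨hx0, ?_⟩
  have hmem2 : (x0, A' x0) ∈ G.topologicalClosure := by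
    have := hclos.2 x0 hx0
    rw [hGc] at this
    exact this
  set z := A' x0 + y with hz
  have hmem3 : ((0 : E), z) ∈ G.topologicalClosure := by
    have := G.topologicalClosure.sub_mem hmem2 hmem
    simpa [hz] using this
  have hV : ∀ v, ‖ι v‖ ≤ ‖ι v - z‖ := by
    intro v
    have hb : ∀ h : ℝ, 0 < h → ‖ι v‖ ≤ ‖ι v - z - h • A0 v‖ := by
      intro h hh
      have hm : (h • ι v, z + h • A0 v) ∈ G.topologicalClosure := by
        have hv : (ι v, A0 v) ∈ G.topologicalClosure :=
          G.le_topologicalClosure ⟨v, rfl⟩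
        have := G.topologicalClosure.add_mem hmem3 (G.topologicalClosure.smul_mem h hv)
        simpa using this
      have hd := diss _ hm h⁻¹
      simp only [norm_smul, Real.norm_of_nonneg hh.le, smul_smul, inv_mul_cancel₀ hh.ne',
        one_smul] at hd
      rw [← mul_assoc, inv_mul_cancel₀ hh.ne', one_mul, ← sub_sub] at hd
      exact hd
    have ht : Tendsto (fun h : ℝ => ‖ι v - z - h • A0 v‖) (𝓝[>] 0) (𝓝 ‖ι v - z‖) := by
      have : Continuous (fun h : ℝ => ‖ι v - z - h • A0 v‖) := by fun_prop
      have h2 := this.tendsto 0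
      simp only [zero_smul, sub_zero] at h2
      exact h2.mono_left nhdsWithin_le_nhds
    refine ge_of_tendsto ht ?_
    filter_upwards [self_mem_nhdsWithin] with h hh using hb h hh
  have hall : ∀ x : E, ‖x‖ ≤ ‖x - z‖ := fun x =>
    hι.induction_on x (isClosed_le (by fun_prop) (by fun_prop)) hV
  have := hall z
  simpa using this

end Helpers

/-- Theorem 2: every branching point `x₀` of the parameterized periodic
problems `(P_{T,λ})` satisfies `Âx₀ + F̂(x₀) = 0`, where `Â` is the closure of the averaged
operator `A₀` and `F̂(x) = (1/T)∫₀ᵀ F(τ,x)dτ`. -/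
theorem statement_15
    {E : Type*} [NormedAddCommGroup E] [NormedSpace ℝ E] [CompleteSpace E]
    [TopologicalSpace.SeparableSpace E]
    {V : Type*} [NormedAddCommGroup V] [NormedSpace ℝ V] [CompleteSpace V]
    (ι : V →L[ℝ] E) (hιinj : Function.Injective ι) (hιdense : DenseRange ι)
    (T : ℝ) (hT : 0 < T)
    (A : HypData E V) (ω MV ωV : ℝ)
    (hgen : HypGen T A)
    (h1 : Hyp1' T A ω)
    (h2 : Hyp2 ι T A MV ωV)
    (h3 : Hyp3 ι T A)
    (h4 : Hyp4 ι T A ω)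
    (h5 : Hyp5 T A)
    -- the nonlinearity `F` and conditions (F1)–(F4)
    (F : ℝ → E → E)
    (hFc : ContinuousOn (fun p : ℝ × E => F p.1 p.2) (Icc (0 : ℝ) T ×ˢ (univ : Set E)))
    (hF1 : ∀ x : E, ∃ r > (0 : ℝ), ∃ Lc > (0 : ℝ), ∀ t ∈ Icc (0 : ℝ) T,
      ∀ x₁ ∈ Metric.ball x r, ∀ x₂ ∈ Metric.ball x r, ‖F t x₁ - F t x₂‖ ≤ Lc * ‖x₁ - x₂‖)
    (c : ℝ) (hc : 0 < c)
    (hF2 : ∀ t ∈ Icc (0 : ℝ) T, ∀ x : E, ‖F t x‖ ≤ c * (1 + ‖x‖))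
    (k : ℝ) (hk0 : 0 ≤ k) (hkω : k < ω)
    (hF3 : ∀ Q : Set E, Bornology.IsBounded Q →
      hausdorffMNC {y : E | ∃ t ∈ Icc (0 : ℝ) T, ∃ x ∈ Q, y = F t x} ≤ k * hausdorffMNC Q)
    (hF4 : ∀ x : E, F 0 x = F T x)
    -- `RR lam` is the evolution system determined by `{λA(t)}`
    (RR : ℝ → ℝ → ℝ → E →L[ℝ] E)
    (hRR : ∀ lam > (0 : ℝ),
      IsDeterminedEvolSystem ι T (fun s => lam • A.bdd s) 1 (-(lam * ω)) (RR lam))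
    -- `x₀` is a branching point: `T`-periodic points `(xₙ, λₙ)` with `λₙ → 0⁺`, `xₙ → x₀`
    (x0 : E) (xn : ℕ → E) (ln : ℕ → ℝ) (un : ℕ → ℝ → E)
    (hlnpos : ∀ n, 0 < ln n) (hln : Tendsto ln atTop (𝓝 0))
    (hxn : Tendsto xn atTop (𝓝 x0))
    (hmild : ∀ n, ContinuousOn (un n) (Icc (0 : ℝ) T) ∧
      (∀ t ∈ Icc (0 : ℝ) T, un n t =
        RR (ln n) t 0 (xn n) + ln n • ∫ s in (0 : ℝ)..t, RR (ln n) t s (F s (un n s))) ∧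
      un n T = xn n)
    -- `f` represents `A₀` with domain `ι(V)` and `(D',A')` is its closure `Â`
    (f : E → E) (hf : ∀ v : V, f (ι v) = timeAvg T A v)
    (D' : Set E) (A' : E → E) (hclos : IsClosureOf D' A' (Set.range ι) f) :
    x0 ∈ D' ∧ A' x0 + (1 / T) • (∫ τ in (0 : ℝ)..T, F τ x0) = 0 := by
  obtain ⟨μ0, hμ, hd⟩ := h4
  have hω := h1.1
  have hB := h3.2
  -- bounds for the solutions
  obtain ⟨M, hM⟩ : ∃ M : ℝ, ∀ n, ‖xn n‖ ≤ M := by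
    obtain ⟨M, hM⟩ := hxn.norm.bddAbove_range
    exact ⟨M, fun n => hM ⟨n, rfl⟩⟩
  have hFu : ∀ n, ContinuousOn (fun s => F s (un n s)) (Icc 0 T) := fun n =>
    hFc.comp (f := fun s => (s, un n s)) (continuousOn_id.prodMk (hmild n).1)
      (fun s hs => ⟨hs, mem_univ _⟩)
  have hint : ∀ n (K : ℝ), (∀ s ∈ Icc 0 T, ‖F s (un n s)‖ ≤ K) → ∀ t ∈ Icc 0 T,
      ‖∫ s in (0 : ℝ)..t, RR (ln n) t s (F s (un n s))‖ ≤ K * T := by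
    intro n K hK t ht
    have hK0 : 0 ≤ K := (norm_nonneg _).trans (hK 0 ⟨le_rfl, hT.le⟩)
    refine (intervalIntegral.norm_integral_le_of_norm_le_const (C := K) fun s hs => ?_).trans ?_
    · rw [uIoc_of_le ht.1] at hs
      exact (aux_norm_le (hlnpos n) hω (hRR _ (hlnpos n)) hs.1.le hs.2 ht.2 _).trans
        (hK s ⟨hs.1.le, hs.2.trans ht.2⟩)
    · rw [sub_zero, abs_of_nonneg ht.1]
      exact mul_le_mul_of_nonneg_left ht.2 hK0
  have hub : ∀ᶠ n in atTop, ∀ t ∈ Icc 0 T, ‖un n t‖ ≤ 2 * M + 1 := by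
    have hsm : ∀ᶠ n in atTop, ln n < 1 / (2 * c * T) :=
      hln.eventually_lt_const (by positivity)
    filter_upwards [hsm] with n hn
    obtain ⟨t0, ht0, hmax⟩ := isCompact_Icc.exists_isMaxOn (nonempty_Icc.2 hT.le)
      (hmild n).1.norm
    have hmax' : ∀ t ∈ Icc 0 T, ‖un n t‖ ≤ ‖un n t0‖ := fun t ht => hmax ht
    have hi := hint n (c * (1 + ‖un n t0‖)) (fun s hs => (hF2 s hs _).trans (by
      have := hmax' s hs
      gcongr)) t0 ht0
    have he := (hmild n).2.1 t0 ht0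
    have hb : ‖un n t0‖ ≤ M + ln n * (c * (1 + ‖un n t0‖) * T) := by
      calc ‖un n t0‖ ≤ ‖RR (ln n) t0 0 (xn n)‖ +
            ‖ln n • ∫ s in (0 : ℝ)..t0, RR (ln n) t0 s (F s (un n s))‖ := by
            conv_lhs => rw [he]
            exact norm_add_le _ _
        _ ≤ M + ln n * (c * (1 + ‖un n t0‖) * T) := by
            rw [norm_smul, Real.norm_of_nonneg (hlnpos n).le]
            exact add_le_add ((aux_norm_le (hlnpos n) hω (hRR _ (hlnpos n)) le_rfl ht0.1 ht0.2
              _).trans (hM n)) (mul_le_mul_of_nonneg_left hi (hlnpos n).le)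
    have hlc : ln n * (c * T) ≤ 1 / 2 := by
      rw [lt_div_iff₀ (by positivity)] at hn
      nlinarith
    intro t ht
    have hha := hmax' t ht
    have hhb : ln n * (c * (1 + ‖un n t0‖) * T) ≤ 1 / 2 * (1 + ‖un n t0‖) := by
      have : ln n * (c * (1 + ‖un n t0‖) * T) = ln n * (c * T) * (1 + ‖un n t0‖) := by ring
      rw [this]
      exact mul_le_mul_of_nonneg_right hlc (by positivity)
    linarith
  have hFb : ∀ᶠ n in atTop, ∀ s ∈ Icc 0 T, ‖F s (un n s)‖ ≤ c * (1 + (2 * M + 1)) := by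
    filter_upwards [hub] with n hn s hs
    refine (hF2 s hs _).trans ?_
    have := hn s hs
    gcongr
  -- pointwise convergence of the solutions
  have hulim : ∀ t ∈ Icc 0 T, Tendsto (fun n => un n t) atTop (𝓝 x0) := by
    intro t ht
    have l1 := aux_tendsto' hιdense hB hω hRR hlnpos hln le_rfl ht.1 ht.2 hxn
    have l2 : Tendsto (fun n => ln n • ∫ s in (0 : ℝ)..t, RR (ln n) t s (F s (un n s)))
        atTop (𝓝 0) := by
      have l3 : Tendsto (fun n => ln n * (c * (1 + (2 * M + 1)) * T)) atTop (𝓝 0) := by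
        simpa using hln.mul_const (c * (1 + (2 * M + 1)) * T)
      refine squeeze_zero_norm' ?_ l3
      filter_upwards [hFb] with n hn
      rw [norm_smul, Real.norm_of_nonneg (hlnpos n).le]
      exact mul_le_mul_of_nonneg_left (hint n _ hn t ht) (hlnpos n).le
    have l4 := l1.add l2
    rw [add_zero] at l4
    exact l4.congr fun n => ((hmild n).2.1 t ht).symm
  have hFlim : ∀ s ∈ Icc 0 T, Tendsto (fun n => F s (un n s)) atTop (𝓝 (F s x0)) := by
    intro s hs
    have hcs : Continuous (fun x => F s x) := by
      rw [← continuousOn_univ]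
      exact hFc.comp (f := fun x => (s, x)) (by fun_prop) (fun x _ => ⟨hs, mem_univ _⟩)
    exact (hcs.tendsto x0).comp (hulim s hs)
  have hI1 := aux_integral hT hιdense hB hω hRR hlnpos hln (fun s => F s x0)
    (fun n s => F s (un n s)) hFu hFlim _ hFb
  have hbint : IntervalIntegrable A.bdd volume 0 T :=
    ContinuousOn.intervalIntegrable (by rwa [uIcc_of_le hT.le])
  refine aux_abstract (A0 := timeAvg T A) hιdense hω hμ hd (fun n => 1 / (ln n * T))
    (fun n => by have := hlnpos n; positivity) ?_ (fun n => RR (ln n) T 0) ?_ ?_ xn x0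
    ((1 / T) • (∫ τ in (0 : ℝ)..T, F τ x0)) hxn ?_ f hf D' A' hclos
  · have : Tendsto (fun n => ω * (ln n * T)) atTop (𝓝 0) := by
      simpa using (hln.mul_const T).const_mul ω
    refine this.congr fun n => ?_
    rw [one_div, div_inv_eq_mul]
  · intro n
    have h := (hRR _ (hlnpos n)).2.1 0 T le_rfl hT.le le_rfl
    rw [one_mul, sub_zero] at h
    convert h using 2
    rw [one_div, div_inv_eq_mul]; ring
  · intro v
    have hbv : ContinuousOn (fun s => A.bdd s v) (Icc 0 T) := hB.clm_apply continuousOn_const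
    obtain ⟨C, hC⟩ := isCompact_Icc.exists_bound_of_continuousOn hbv
    have hI2 := aux_integral hT hιdense hB hω hRR hlnpos hln (fun s => A.bdd s v)
      (fun _ s => A.bdd s v) (fun _ => hbv) (fun _ _ => tendsto_const_nhds) C
      (Eventually.of_forall fun _ => hC)
    have hlimeq : timeAvg T A v = (1 / T) • ∫ s in (0 : ℝ)..T, A.bdd s v := by
      rw [timeAvg, ContinuousLinearMap.smul_apply,
        ContinuousLinearMap.intervalIntegral_apply hbint]
    rw [hlimeq]
    refine (hI2.const_smul (1 / T)).congr fun n => ?_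
    have hR := hRR _ (hlnpos n)
    have hct := aux_cont (hlnpos n) hω hR (t := T) ⟨hT.le, le_rfl⟩ (fun s => A.bdd s v) hbv
    have hder : ∀ s ∈ Icc (0 : ℝ) T, HasDerivWithinAt (fun r => RR (ln n) T r (ι v))
        (-(ln n • RR (ln n) T s (A.bdd s v))) (Icc 0 T) s := by
      intro s hs
      have := hR.2.2.2 v s T hs.1 hs.2 le_rfl
      simpa using this
    have hftc := intervalIntegral.integral_eq_sub_of_hasDeriv_right_of_le hT.le
      (f := fun r => RR (ln n) T r (ι v)) (f' := fun s => -(ln n • RR (ln n) T s (A.bdd s v)))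
      (fun s hs => (hder s hs).continuousWithinAt)
      (fun s hs => ((hder s (Ioo_subset_Icc_self hs)).hasDerivAt
        (Icc_mem_nhds hs.1 hs.2)).hasDerivWithinAt)
      (ContinuousOn.intervalIntegrable (by
        rw [uIcc_of_le hT.le]; exact (hct.const_smul (ln n)).neg))
    rw [intervalIntegral.integral_neg, intervalIntegral.integral_smul,
      hR.1.refl T ⟨hT.le, le_rfl⟩] at hftc
    have hha : RR (ln n) T 0 (ι v) - ι v
        = ln n • ∫ s in (0 : ℝ)..T, RR (ln n) T s (A.bdd s v) := by
      rw [neg_eq_iff_eq_neg.1 hftc, neg_sub]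
      rfl
    rw [hha, smul_smul]
    congr 1
    have := (hlnpos n).ne'
    field_simp
  · refine ((hI1.const_smul (1 / T)).neg).congr fun n => ?_
    have he := (hmild n).2.1 T ⟨hT.le, le_rfl⟩
    rw [(hmild n).2.2] at he
    have hha : RR (ln n) T 0 (xn n) - xn n
        = -(ln n • ∫ s in (0 : ℝ)..T, RR (ln n) T s (F s (un n s))) := by
      rw [sub_eq_iff_eq_add, eq_neg_add_iff_add_eq, add_comm]
      exact he.symm
    rw [hha, smul_neg, smul_smul]
    congr 2
    have := (hlnpos n).ne'
    field_simp
end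
end
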